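/- arXiv:2210.12869 — 5 statements merged into one kernel-verified Lean document; each statement's English description precedes it below -/
import Mathlib

section
/- The supremum of 1 − TV(P_0, P_1) over P_0 ∈ 𝒫_0^η and P_1 ∈ 𝒫_1^η is attained: there exist P_0* ∈ 𝒫_0^η and P_1* ∈ 𝒫_1^η such that 1 − TV(P_0*, P_1*) = sup_{P_0 ∈ 𝒫_0^η, P_1 ∈ 𝒫_1^η} (1 − TV(P_0, P_1)). This follows from weak compactness of 𝒫_0^η and 𝒫_1^η and upper semicontinuity of (P_0,P_1) ↦ 1 − TV(P_0,P_1) with respect to weak convergence. -/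
open MeasureTheory

/-- The total variation distance between two measures:
`TV(P, Q) = sup over measurable sets A of |P(A) − Q(A)|`. -/
noncomputable def tv {Ω : Type*} [MeasurableSpace Ω] (P Q : Measure Ω) : ℝ :=
  ⨆ A : {A : Set Ω // MeasurableSet A}, |(P A.1).toReal - (Q A.1).toReal|

/-- The moment-constrained uncertainty set around nominal `Qhat` with radius `η`. -/
def momentSet {d : ℕ} (X : Set (EuclideanSpace ℝ (Fin d))) {K : ℕ}
    (ψ : Fin K → X → ℝ) (Qhat : ProbabilityMeasure X) (η : ℝ) :
    Set (ProbabilityMeasure X) :=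
  {P | ∀ k, |∫ x, ψ k x ∂(P : Measure X) - ∫ x, ψ k x ∂(Qhat : Measure X)| ≤ η}

/-!
For probability measures, `P A - Q A = P A + Q Aᶜ - 1`. Replacing `A` and `Aᶜ` first by closed
subsets, and then by disjoint open neighbourhoods of these, expresses the total variation as the
supremum of `P U + Q V - 1` over disjoint open sets `U` and `V`. By the portmanteau theorem the mass
of an open set is weakly lower semicontinuous, so the total variation is a supremum of lower
semicontinuous functions and attains its minimum on a product of weakly compact sets.
-/

section TotalVariation

variable {Ω : Type*} [MeasurableSpace Ω] {P Q : Measure Ω}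

lemma abs_measureReal_sub_le_tv [IsFiniteMeasure P] [IsFiniteMeasure Q] {A : Set Ω}
    (hA : MeasurableSet A) : |P.real A - Q.real A| ≤ tv P Q := by
  refine le_ciSup (f := fun A : {A : Set Ω // MeasurableSet A} ↦ |P.real A.1 - Q.real A.1|)
    ⟨max (P.real Set.univ) (Q.real Set.univ), ?_⟩ ⟨A, hA⟩
  rintro _ ⟨B, rfl⟩
  exact abs_sub_le_of_nonneg_of_le
    measureReal_nonneg (le_max_of_le_left (measureReal_mono (Set.subset_univ _)))
    measureReal_nonneg (le_max_of_le_right (measureReal_mono (Set.subset_univ _)))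

lemma measureReal_add_measureReal_sub_one_le_tv [IsFiniteMeasure P] [IsProbabilityMeasure Q]
    {A B : Set Ω} (hA : MeasurableSet A) (hAB : Disjoint A B) :
    P.real A + Q.real B - 1 ≤ tv P Q :=
  calc P.real A + Q.real B - 1 ≤ P.real A + Q.real Aᶜ - 1 := by
        gcongr _ + ?_ - _
        exact measureReal_mono hAB.subset_compl_left
    _ = P.real A - Q.real A := by rw [probReal_compl_eq_one_sub hA]; ring
    _ ≤ |P.real A - Q.real A| := le_abs_self _
    _ ≤ tv P Q := abs_measureReal_sub_le_tv hA

variable [IsProbabilityMeasure P] [IsProbabilityMeasure Q]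

lemma exists_measurableSet_lt_of_lt_tv {c : ℝ} (hc : c < tv P Q) :
    ∃ A, MeasurableSet A ∧ c < P.real A + Q.real Aᶜ - 1 := by
  have : Nonempty {A : Set Ω // MeasurableSet A} := ⟨⟨∅, .empty⟩⟩
  obtain ⟨⟨A, hA⟩, hcA⟩ := exists_lt_of_lt_ciSup hc
  obtain h | h : c < P.real A - Q.real A ∨ c < -(P.real A - Q.real A) := lt_abs.1 hcA
  · exact ⟨A, hA, by rw [probReal_compl_eq_one_sub hA]; linarith⟩
  · exact ⟨Aᶜ, hA.compl, by rw [compl_compl, probReal_compl_eq_one_sub hA]; linarith⟩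

variable [TopologicalSpace Ω]

lemma exists_isClosed_lt_measureReal {μ : Measure Ω} [IsFiniteMeasure μ] [μ.WeaklyRegular]
    [OpensMeasurableSpace Ω] {A : Set Ω} (hA : MeasurableSet A) {c : ℝ} (hc : c < μ.real A) :
    ∃ F ⊆ A, IsClosed F ∧ c < μ.real F := by
  obtain ⟨F, hFA, hF, hlt⟩ := hA.exists_isClosed_sdiff_lt (measure_ne_top μ A)
    (ENNReal.ofReal_pos.2 (sub_pos.2 hc)).ne'
  have hdiff : μ.real (A \ F) < μ.real A - c :=
    (ENNReal.lt_ofReal_iff_toReal_lt (measure_ne_top μ _)).1 hlt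
  rw [measureReal_sdiff hFA hF.measurableSet] at hdiff
  exact ⟨F, hFA, hF, by linarith⟩

lemma lt_tv_iff_exists_disjoint_isOpen [NormalSpace Ω] [OpensMeasurableSpace Ω] [P.WeaklyRegular]
    [Q.WeaklyRegular] {c : ℝ} :
    c < tv P Q ↔
      ∃ U V, IsOpen U ∧ IsOpen V ∧ Disjoint U V ∧ c < P.real U + Q.real V - 1 := by
  constructor
  · intro hc
    obtain ⟨A, hA, hcA⟩ := exists_measurableSet_lt_of_lt_tv hc
    obtain ⟨a, hca, haA⟩ : ∃ a, c + 1 - Q.real Aᶜ < a ∧ a < P.real A :=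
      exists_between (by linarith)
    obtain ⟨F, hFA, hF, haF⟩ := exists_isClosed_lt_measureReal hA haA
    obtain ⟨G, hGA, hG, hcG⟩ := exists_isClosed_lt_measureReal hA.compl (sub_lt_comm.1 hca)
    obtain ⟨U, V, hU, hV, hFU, hGV, hUV⟩ :=
      normal_separation hF hG (disjoint_compl_right.mono hFA hGA)
    have haU : a < P.real U := haF.trans_le (measureReal_mono hFU)
    have hcV : c + 1 - a < Q.real V := hcG.trans_le (measureReal_mono hGV)
    exact ⟨U, V, hU, hV, hUV, by linarith⟩
  · rintro ⟨U, V, hU, -, hUV, hc⟩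
    exact hc.trans_le (measureReal_add_measureReal_sub_one_le_tv hU.measurableSet hUV)

end TotalVariation

section WeakConvergence

open Filter TopologicalSpace

variable {Ω : Type*} [TopologicalSpace Ω] [MeasurableSpace Ω]

lemma lowerSemicontinuous_measureReal_of_isOpen [OpensMeasurableSpace Ω] [HasOuterApproxClosed Ω]
    {U : Set Ω} (hU : IsOpen U) :
    LowerSemicontinuous fun P : ProbabilityMeasure Ω ↦ (P : Measure Ω).real U := by
  have hENNReal : LowerSemicontinuous fun P : ProbabilityMeasure Ω ↦ (P : Measure Ω) U :=
    lowerSemicontinuous_iff_le_liminf.2 fun _ ↦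
      ProbabilityMeasure.le_liminf_measure_open_of_tendsto tendsto_id hU
  intro P c hc
  obtain hc0 | hc0 := lt_or_ge c 0
  · exact .of_forall fun _ ↦ hc0.trans_le measureReal_nonneg
  · filter_upwards [hENNReal P _ ((ENNReal.ofReal_lt_iff_lt_toReal hc0 (by finiteness)).2 hc)]
      with R hR
    exact (ENNReal.ofReal_lt_iff_lt_toReal hc0 (by finiteness)).1 hR

lemma lowerSemicontinuous_tv [PseudoMetrizableSpace Ω] [BorelSpace Ω] :
    LowerSemicontinuous
      fun p : ProbabilityMeasure Ω × ProbabilityMeasure Ω ↦ tv (p.1 : Measure Ω) p.2 := by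
  rintro ⟨P, Q⟩ c hc
  obtain ⟨U, V, hU, hV, hUV, hcUV⟩ := lt_tv_iff_exists_disjoint_isOpen.1 hc
  have hlsc : LowerSemicontinuous fun p : ProbabilityMeasure Ω × ProbabilityMeasure Ω ↦
      (p.1 : Measure Ω).real U + (p.2 : Measure Ω).real V :=
    ((lowerSemicontinuous_measureReal_of_isOpen hU).comp continuous_fst).add
      ((lowerSemicontinuous_measureReal_of_isOpen hV).comp continuous_snd)
  filter_upwards [hlsc (P, Q) (c + 1) (lt_sub_iff_add_lt.1 hcUV)] with p hp
  exact lt_tv_iff_exists_disjoint_isOpen.2 ⟨U, V, hU, hV, hUV, lt_sub_iff_add_lt.2 hp⟩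

theorem sup_one_sub_tv_attained_general [PseudoMetrizableSpace Ω] [BorelSpace Ω]
    {S T : Set (ProbabilityMeasure Ω)} (hS : IsCompact S) (hT : IsCompact T)
    (hS_nonempty : S.Nonempty) (hT_nonempty : T.Nonempty) :
    ∃ P0s ∈ S, ∃ P1s ∈ T,
      1 - tv (P0s : Measure Ω) (P1s : Measure Ω) =
        sSup {r : ℝ | ∃ P0 ∈ S, ∃ P1 ∈ T, r = 1 - tv (P0 : Measure Ω) (P1 : Measure Ω)} := by
  obtain ⟨⟨P0, P1⟩, ⟨hP0, hP1⟩, hmin⟩ := (lowerSemicontinuous_tv.lowerSemicontinuousOn _)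
    |>.exists_isMinOn (hS_nonempty.prod hT_nonempty) (hS.prod hT)
  refine ⟨P0, hP0, P1, hP1, Eq.symm <| IsGreatest.csSup_eq ?_⟩
  refine ⟨⟨P0, hP0, P1, hP1, rfl⟩, ?_⟩
  rintro _ ⟨R0, hR0, R1, hR1, rfl⟩
  exact sub_le_sub_left (hmin (Set.mk_mem_prod hR0 hR1)) 1

end WeakConvergence

section MomentSet

variable {d : ℕ} {X : Set (EuclideanSpace ℝ (Fin d))} {K : ℕ} {ψ : Fin K → X → ℝ} {η : ℝ}

lemma self_mem_momentSet (ψ : Fin K → X → ℝ) (Q : ProbabilityMeasure X) (hη : 0 ≤ η) :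
    Q ∈ momentSet X ψ Q η :=
  fun _ ↦ by rwa [sub_self, abs_zero]

lemma isClosed_momentSet [CompactSpace X] (hψ : ∀ k, Continuous (ψ k)) (Q : ProbabilityMeasure X)
    (η : ℝ) : IsClosed (momentSet X ψ Q η) := by
  have hcont (k : Fin K) : Continuous fun P : ProbabilityMeasure X ↦ ∫ x, ψ k x ∂(P : Measure X) :=
    ProbabilityMeasure.continuous_integral_continuousMap (⟨ψ k, hψ k⟩ : C(X, ℝ))
  simp only [momentSet, Set.ofPred_forall]
  exact isClosed_iInter fun k ↦
    isClosed_le ((hcont k).sub continuous_const).abs continuous_const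

end MomentSet

/-- The supremum of `1 − TV(P₀, P₁)` over `P₀ ∈ 𝒫₀^η`, `P₁ ∈ 𝒫₁^η`
is attained at some pair `(P₀*, P₁*)`. -/
theorem sup_one_sub_tv_attained
    {d : ℕ} (X : Set (EuclideanSpace ℝ (Fin d))) (hX : IsCompact X)
    {K : ℕ} (ψ : Fin K → X → ℝ) (hψ : ∀ k, Continuous (ψ k))
    (Q0 Q1 : ProbabilityMeasure X) (η : ℝ) (hη : 0 < η) :
    ∃ P0s ∈ momentSet X ψ Q0 η, ∃ P1s ∈ momentSet X ψ Q1 η,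
      1 - tv (P0s : Measure X) (P1s : Measure X) =
        sSup {r : ℝ | ∃ P0 ∈ momentSet X ψ Q0 η, ∃ P1 ∈ momentSet X ψ Q1 η,
          r = 1 - tv (P0 : Measure X) (P1 : Measure X)} := by
  have : CompactSpace X := isCompact_iff_compactSpace.1 hX
  exact sup_one_sub_tv_attained_general
    (isClosed_momentSet hψ Q0 η).isCompact (isClosed_momentSet hψ Q1 η).isCompact
    ⟨Q0, self_mem_momentSet ψ Q0 hη.le⟩ ⟨Q1, self_mem_momentSet ψ Q1 hη.le⟩
end

section
/- (Theorem 1.) The minimax and maximin values of the robust Bayesian hypothesis-testing problem coincide: inf_φ sup_{P_0 ∈ 𝒫_0^η, P_1 ∈ 𝒫_1^η} P_E(φ; P_0, P_1) = sup_{P_0 ∈ 𝒫_0^η, P_1 ∈ 𝒫_1^η} inf_φ P_E(φ; P_0, P_1), where the infimum is over all measurable tests φ : X → [0,1]. -/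
open MeasureTheory

/-- The Bayes error with equal priors of a (randomized) test `φ` under `(P₀, P₁)`:
`P_E(φ; P₀, P₁) = (1/2) E_{P₀}[φ] + (1/2) E_{P₁}[1 − φ]`. -/
noncomputable def bayesError {Ω : Type*} [MeasurableSpace Ω]
    (φ : Ω → ℝ) (P0 P1 : Measure Ω) : ℝ :=
  (1 / 2) * ∫ x, φ x ∂P0 + (1 / 2) * ∫ x, (1 - φ x) ∂P1

/-!
Up to an affine change of scale, the Bayes error of a test `φ` is minus the linear functional
`∫ φ dP₁ - ∫ φ dP₀`. Moment-constrained sets are convex and weakly compact, hence so is the set of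
functionals `P₁ - P₀` on bounded continuous functions, and Sion's theorem gives the minimax equality
for continuous tests. Truncated continuous functions are dense among the tests in `L¹(P₀ + P₁)`, so
against each fixed pair continuous tests do as well as measurable ones, which carries the equality
over to measurable tests.
-/

open Set TopologicalSpace
open scoped BoundedContinuousFunction NNReal Pointwise

theorem ciInf_ciSup_eq_ciSup_ciInf_of_forall_lt {ι κ γ : Type*} [Nonempty ι] [Nonempty κ]
    [ConditionallyCompleteLinearOrder γ] [DenselyOrdered γ] {f : ι → κ → γ} {l u : γ}
    (hf : ∀ i j, f i j ∈ Icc l u) (h : ∀ c, (∀ j, ∃ i, f i j < c) → ∃ i, ∀ j, f i j ≤ c) :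
    ⨅ i, ⨆ j, f i j = ⨆ j, ⨅ i, f i j := by
  have hbelow : ∀ j, BddBelow (range fun i => f i j) :=
    fun j => ⟨l, forall_mem_range.2 fun i => (hf i j).1⟩
  have habove : ∀ i, BddAbove (range (f i)) :=
    fun i => ⟨u, forall_mem_range.2 fun j => (hf i j).2⟩
  have hsup_below : BddBelow (range fun i => ⨆ j, f i j) :=
    ⟨l, forall_mem_range.2 fun i =>
      le_ciSup_of_le (habove i) (Classical.arbitrary κ) (hf i _).1⟩
  have hinf_above : BddAbove (range fun j => ⨅ i, f i j) :=
    ⟨u, forall_mem_range.2 fun j =>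
      ciInf_le_of_le (hbelow j) (Classical.arbitrary ι) (hf _ j).2⟩
  refine le_antisymm (le_of_forall_gt_imp_ge_of_dense fun c hc => ?_)
    (ciSup_le fun j => le_ciInf fun i =>
      (ciInf_le (hbelow j) i).trans (le_ciSup (habove i) j))
  obtain ⟨i, hi⟩ := h c fun j => exists_lt_of_ciInf_lt ((le_ciSup hinf_above j).trans_lt hc)
  exact ciInf_le_of_le hsup_below i (ciSup_le hi)

theorem exists_forall_lt_apply_of_isCompact_of_convex {F : Type*} [AddCommGroup F] [Module ℝ F]
    [TopologicalSpace F] [IsTopologicalAddGroup F] [ContinuousSMul ℝ F]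
    {S : Set (WeakDual ℝ F)} (hS : IsCompact S) (hSconv : Convex ℝ S) (hSne : S.Nonempty)
    {Y : Set F} (hY : Convex ℝ Y) {c : ℝ} (h : ∀ L ∈ S, ∃ y ∈ Y, c < L y) :
    ∃ y ∈ Y, ∀ L ∈ S, c < L y := by
  obtain ⟨t, htY, htfin, hcover⟩ := hS.elim_finite_subcover_image
    (b := Y) (c := fun y => {L : WeakDual ℝ F | c < L y})
    (fun y _ => isOpen_lt continuous_const (WeakDual.eval_continuous y))
    (fun L hL => by simpa using h L hL)
  let eval (y : F) : WeakDual ℝ F →ₗ[ℝ] ℝ := (topDualPairing ℝ F).flip y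
  exact Sion.exists_lt_iInf_of_lt_iInf_of_finite hSne hS
    (fun y _ => (WeakDual.eval_continuous y).lowerSemicontinuous.lowerSemicontinuousOn _)
    (fun y _ => ((eval y).convexOn hSconv).quasiconvexOn) hY
    (fun L _ => (ContinuousLinearMap.continuous L).upperSemicontinuous.upperSemicontinuousOn _)
    (fun L _ => (LinearMap.concaveOn (ContinuousLinearMap.toLinearMap L) hY).quasiconcaveOn)
    hSconv htfin htY (fun L hL => by simpa using hcover hL)

section BayesError

variable {Ω : Type*} [MeasurableSpace Ω] {P0 P1 : Measure Ω} {φ ψ : Ω → ℝ}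

theorem bayesError_eq [IsProbabilityMeasure P1] (hφ : Integrable φ P1) :
    bayesError φ P0 P1 = (1 - (∫ x, φ x ∂P1 - ∫ x, φ x ∂P0)) / 2 := by
  rw [bayesError, integral_sub (integrable_const _) hφ, integral_const, probReal_univ, one_smul]
  ring

theorem bayesError_mem_Icc [IsProbabilityMeasure P0] [IsProbabilityMeasure P1]
    (hφ : Measurable φ) (h : ∀ x, φ x ∈ Icc (0 : ℝ) 1) : bayesError φ P0 P1 ∈ Icc (0 : ℝ) 1 := by
  have integral_mem (P : Measure Ω) [IsProbabilityMeasure P] : ∫ x, φ x ∂P ∈ Icc (0 : ℝ) 1 :=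
    (convex_Icc 0 1).integral_mem isClosed_Icc (.of_forall h)
      (.of_mem_Icc 0 1 hφ.aemeasurable (.of_forall h))
  obtain ⟨h0, h0'⟩ := integral_mem P0
  obtain ⟨h1, h1'⟩ := integral_mem P1
  rw [bayesError_eq (.of_mem_Icc 0 1 hφ.aemeasurable (.of_forall h))]
  constructor <;> linarith

theorem bayesError_le_add_integral_abs_sub [IsProbabilityMeasure P1]
    (hφ : Integrable φ (P0 + P1)) (hψ : Integrable ψ (P0 + P1)) :
    bayesError ψ P0 P1 ≤ bayesError φ P0 P1 + (∫ x, |φ x - ψ x| ∂(P0 + P1)) / 2 := by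
  obtain ⟨hφ0, hφ1⟩ := integrable_add_measure.1 hφ
  obtain ⟨hψ0, hψ1⟩ := integrable_add_measure.1 hψ
  have abs_sub_le {P : Measure Ω} (hφP : Integrable φ P) (hψP : Integrable ψ P) :
      |∫ x, φ x ∂P - ∫ x, ψ x ∂P| ≤ ∫ x, |φ x - ψ x| ∂P := by
    rw [← integral_sub hφP hψP]
    exact abs_integral_le_integral_abs
  have h0 := (abs_le.1 (abs_sub_le hφ0 hψ0)).1
  have h1 := (abs_le.1 (abs_sub_le hφ1 hψ1)).2
  rw [bayesError_eq hφ1, bayesError_eq hψ1,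
    integral_add_measure (f := fun x => |φ x - ψ x|) (hφ0.sub hψ0).abs (hφ1.sub hψ1).abs]
  linarith

end BayesError

section ContinuousTest

variable {Ω : Type*} [TopologicalSpace Ω]

variable (Ω) in
/-- The continuous randomized tests `Ω → [0, 1]`, as a convex subset of the space of bounded
continuous functions. -/
def continuousTests : Set (Ω →ᵇ ℝ) :=
  {g | ∀ x, g x ∈ Icc (0 : ℝ) 1}

theorem convex_continuousTests : Convex ℝ (continuousTests Ω) :=
  fun _ hg _ hh _ _ ha hb hab x => convex_Icc (0 : ℝ) 1 (hg x) (hh x) ha hb hab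

variable [MeasurableSpace Ω]

theorem exists_continuousTest_integral_abs_sub_le [NormalSpace Ω] [BorelSpace Ω] {μ : Measure Ω}
    [μ.WeaklyRegular] {φ : Ω → ℝ} (hφ : Integrable φ μ) (h : ∀ x, φ x ∈ Icc (0 : ℝ) 1)
    {ε : ℝ} (hε : 0 < ε) :
    ∃ g ∈ continuousTests Ω, Integrable g μ ∧ ∫ x, |φ x - g x| ∂μ ≤ ε := by
  obtain ⟨f, hf, hfint⟩ := hφ.exists_boundedContinuous_integral_sub_le hε
  let g : Ω →ᵇ ℝ := 0 ⊔ (1 ⊓ f)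
  have g_apply (x : Ω) : g x = max 0 (min 1 (f x)) := rfl
  have hg : g ∈ continuousTests Ω := fun x => by simp [g_apply]
  have abs_sub_le (x : Ω) : |φ x - g x| ≤ ‖φ x - f x‖ := by
    obtain ⟨h0, h1⟩ := h x
    rw [Real.norm_eq_abs, g_apply]
    grind
  have hgint : Integrable g μ := by
    refine hfint.mono g.continuous.aestronglyMeasurable (.of_forall fun x => ?_)
    rw [Real.norm_eq_abs, Real.norm_eq_abs, g_apply]
    grind
  exact ⟨g, hg, hgint,
    (integral_mono (hφ.sub hgint).abs (hφ.sub hfint).norm abs_sub_le).trans hf⟩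

theorem exists_continuousTest_bayesError_lt [PseudoMetrizableSpace Ω] [BorelSpace Ω]
    {P0 P1 : Measure Ω} [IsProbabilityMeasure P0] [IsProbabilityMeasure P1] {φ : Ω → ℝ}
    (hφ : Measurable φ) (h : ∀ x, φ x ∈ Icc (0 : ℝ) 1) {c : ℝ} (hc : bayesError φ P0 P1 < c) :
    ∃ g ∈ continuousTests Ω, bayesError g P0 P1 < c := by
  have hφint : Integrable φ (P0 + P1) := .of_mem_Icc 0 1 hφ.aemeasurable (.of_forall h)
  obtain ⟨g, hg, hgint, hle⟩ := exists_continuousTest_integral_abs_sub_le hφint h (sub_pos.2 hc)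
  exact ⟨g, hg, by linarith [bayesError_le_add_integral_abs_sub hφint hgint]⟩

variable [OpensMeasurableSpace Ω]

/-- The functional `g ↦ ∫ g dP` on bounded continuous functions. It realizes probability measures
inside the weak dual, where the linear structure needed by Sion's theorem is available. -/
noncomputable def integralFunctional (P : ProbabilityMeasure Ω) : WeakDual ℝ (Ω →ᵇ ℝ) :=
  StrongDual.toWeakDual <| LinearMap.mkContinuous
    { toFun := fun g => ∫ x, g x ∂(P : Measure Ω)
      map_add' := fun g h => integral_add (g.integrable _) (h.integrable _)
      map_smul' := fun a g => integral_const_mul a g } 1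
    fun g => by simpa using g.norm_integral_le_norm (P : Measure Ω)

theorem integralFunctional_apply (P : ProbabilityMeasure Ω) (g : Ω →ᵇ ℝ) :
    integralFunctional P g = ∫ x, g x ∂(P : Measure Ω) :=
  rfl

theorem continuous_integralFunctional :
    Continuous (integralFunctional : ProbabilityMeasure Ω → WeakDual ℝ (Ω →ᵇ ℝ)) :=
  WeakDual.continuous_of_continuous_eval
    ProbabilityMeasure.continuous_integral_boundedContinuousFunction

-- `ProbabilityMeasure Ω` is not a module, so convexity is expressed in the `ℝ≥0`-module
-- `Measure Ω`.
theorem convex_image_integralFunctional {S : Set (ProbabilityMeasure Ω)}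
    (hS : Convex ℝ≥0 (ProbabilityMeasure.toMeasure '' S)) :
    Convex ℝ (integralFunctional '' S) := by
  rintro _ ⟨P, hP, rfl⟩ _ ⟨Q, hQ, rfl⟩ a b ha hb hab
  lift a to ℝ≥0 using ha
  lift b to ℝ≥0 using hb
  obtain ⟨R, hR, hRPQ⟩ := hS (mem_image_of_mem _ hP) (mem_image_of_mem _ hQ)
    zero_le zero_le (mod_cast hab)
  refine ⟨R, hR, ContinuousLinearMap.ext fun g => ?_⟩
  change integralFunctional R g = a * integralFunctional P g + b * integralFunctional Q g
  simp only [integralFunctional_apply]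
  rw [hRPQ, integral_add_measure (g.integrable _) (g.integrable _), integral_smul_nnreal_measure,
    integral_smul_nnreal_measure]
  rfl

variable {𝒫₀ 𝒫₁ : Set (ProbabilityMeasure Ω)}

theorem exists_continuousTest_forall_bayesError_lt
    (h𝒫₀ : IsCompact 𝒫₀) (h𝒫₀_conv : Convex ℝ≥0 (ProbabilityMeasure.toMeasure '' 𝒫₀))
    (h𝒫₀_ne : 𝒫₀.Nonempty)
    (h𝒫₁ : IsCompact 𝒫₁) (h𝒫₁_conv : Convex ℝ≥0 (ProbabilityMeasure.toMeasure '' 𝒫₁))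
    (h𝒫₁_ne : 𝒫₁.Nonempty) {c : ℝ}
    (h : ∀ P0 ∈ 𝒫₀, ∀ P1 ∈ 𝒫₁, ∃ g ∈ continuousTests Ω, bayesError g P0 P1 < c) :
    ∃ g ∈ continuousTests Ω, ∀ P0 ∈ 𝒫₀, ∀ P1 ∈ 𝒫₁, bayesError g P0 P1 < c := by
  have bayesError_lt_iff (g : Ω →ᵇ ℝ) (P0 P1 : ProbabilityMeasure Ω) : bayesError g P0 P1 < c ↔
      1 - 2 * c < (integralFunctional P1 - integralFunctional P0) g := by
    change _ ↔ _ < integralFunctional P1 g - integralFunctional P0 g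
    rw [integralFunctional_apply, integralFunctional_apply, bayesError_eq (g.integrable _),
      div_lt_iff₀ two_pos, sub_lt_comm, mul_comm]
  have hcompact : IsCompact (integralFunctional '' 𝒫₁ - integralFunctional '' 𝒫₀) := by
    rw [← sub_image_prod]
    exact ((h𝒫₁.image continuous_integralFunctional).prod
      (h𝒫₀.image continuous_integralFunctional)).image continuous_sub
  obtain ⟨g, hg, hlt⟩ := exists_forall_lt_apply_of_isCompact_of_convex (c := 1 - 2 * c) hcompact
    ((convex_image_integralFunctional h𝒫₁_conv).sub (convex_image_integralFunctional h𝒫₀_conv))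
    ((h𝒫₁_ne.image _).sub (h𝒫₀_ne.image _)) convex_continuousTests <| by
      rintro _ ⟨_, ⟨P1, hP1, rfl⟩, _, ⟨P0, hP0, rfl⟩, rfl⟩
      simpa only [← bayesError_lt_iff] using h P0 hP0 P1 hP1
  exact ⟨g, hg, fun P0 hP0 P1 hP1 => (bayesError_lt_iff g P0 P1).2 <|
    hlt _ (sub_mem_sub (mem_image_of_mem _ hP1) (mem_image_of_mem _ hP0))⟩

end ContinuousTest

theorem minimax_eq_maximin_general {Ω : Type*} [TopologicalSpace Ω] [PseudoMetrizableSpace Ω]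
    [MeasurableSpace Ω] [BorelSpace Ω] {𝒫₀ 𝒫₁ : Set (ProbabilityMeasure Ω)}
    (h𝒫₀ : IsCompact 𝒫₀) (h𝒫₀_conv : Convex ℝ≥0 (ProbabilityMeasure.toMeasure '' 𝒫₀))
    (h𝒫₀_ne : 𝒫₀.Nonempty)
    (h𝒫₁ : IsCompact 𝒫₁) (h𝒫₁_conv : Convex ℝ≥0 (ProbabilityMeasure.toMeasure '' 𝒫₁))
    (h𝒫₁_ne : 𝒫₁.Nonempty) :
    sInf {r : ℝ | ∃ φ : Ω → ℝ, Measurable φ ∧ (∀ x, φ x ∈ Icc (0 : ℝ) 1) ∧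
        r = sSup {e : ℝ | ∃ P0 ∈ 𝒫₀, ∃ P1 ∈ 𝒫₁, e = bayesError φ P0 P1}} =
      sSup {r : ℝ | ∃ P0 ∈ 𝒫₀, ∃ P1 ∈ 𝒫₁,
        r = sInf {e : ℝ | ∃ φ : Ω → ℝ, Measurable φ ∧ (∀ x, φ x ∈ Icc (0 : ℝ) 1) ∧
          e = bayesError φ P0 P1}} := by
  let Test := {φ : Ω → ℝ // Measurable φ ∧ ∀ x, φ x ∈ Icc (0 : ℝ) 1}
  have : Nonempty Test := ⟨⟨0, measurable_zero, fun _ => by simp⟩⟩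
  have := h𝒫₀_ne.to_subtype
  have := h𝒫₁_ne.to_subtype
  have key : ⨅ φ : Test, ⨆ P : 𝒫₀ × 𝒫₁, bayesError φ.1 P.1.1 P.2.1 =
      ⨆ P : 𝒫₀ × 𝒫₁, ⨅ φ : Test, bayesError φ.1 P.1.1 P.2.1 := by
    refine ciInf_ciSup_eq_ciSup_ciInf_of_forall_lt
      (fun φ P => bayesError_mem_Icc φ.2.1 φ.2.2) fun c hc => ?_
    obtain ⟨g, hg, hlt⟩ := exists_continuousTest_forall_bayesError_lt h𝒫₀ h𝒫₀_conv h𝒫₀_ne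
      h𝒫₁ h𝒫₁_conv h𝒫₁_ne fun P0 hP0 P1 hP1 => by
        obtain ⟨φ, hφ⟩ := hc (⟨P0, hP0⟩, ⟨P1, hP1⟩)
        exact exists_continuousTest_bayesError_lt φ.2.1 φ.2.2 hφ
    exact ⟨⟨g, g.continuous.measurable, hg⟩, fun P => (hlt P.1 P.1.2 P.2 P.2.2).le⟩
  have range_test (F : (Ω → ℝ) → ℝ) : range (fun φ : Test => F φ.1) =
      {r | ∃ φ : Ω → ℝ, Measurable φ ∧ (∀ x, φ x ∈ Icc (0 : ℝ) 1) ∧ r = F φ} := by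
    ext; simp [Test, eq_comm, and_assoc]
  have range_measures (F : ProbabilityMeasure Ω → ProbabilityMeasure Ω → ℝ) :
      range (fun P : 𝒫₀ × 𝒫₁ => F P.1 P.2) = {r | ∃ P0 ∈ 𝒫₀, ∃ P1 ∈ 𝒫₁, r = F P0 P1} := by
    ext; simp [eq_comm]
  simp only [← range_measures, ← range_test]
  exact key

section MomentSet

variable {d : ℕ} {X : Set (EuclideanSpace ℝ (Fin d))} {K : ℕ} {ψ : Fin K → X → ℝ}

theorem mem_momentSet_self (Q : ProbabilityMeasure X) {η : ℝ} (hη : 0 ≤ η) :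
    Q ∈ momentSet X ψ Q η :=
  fun k => by simpa using hη

theorem convex_image_momentSet (hψ : ∀ k, ∀ P : ProbabilityMeasure X, Integrable (ψ k) P.toMeasure)
    (Q : ProbabilityMeasure X) (η : ℝ) :
    Convex ℝ≥0 (ProbabilityMeasure.toMeasure '' momentSet X ψ Q η) := by
  rintro _ ⟨P, hP, rfl⟩ _ ⟨P', hP', rfl⟩ a b _ _ hab
  have hR : IsProbabilityMeasure (a • P.toMeasure + b • P'.toMeasure) :=
    ⟨by simp [← ENNReal.coe_add, hab]⟩
  refine ⟨⟨_, hR⟩, fun k => ?_, rfl⟩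
  rw [ProbabilityMeasure.coe_mk, integral_add_measure (hψ k P).smul_measure_nnreal
    (hψ k P').smul_measure_nnreal, integral_smul_nnreal_measure, integral_smul_nnreal_measure]
  exact (convex_closedBall (∫ x, ψ k x ∂Q.toMeasure) η) (hP k) (hP' k) a.2 b.2 (mod_cast hab)

variable [CompactSpace X]

theorem isCompact_momentSet (hψ : ∀ k, Continuous (ψ k)) (Q : ProbabilityMeasure X) (η : ℝ) :
    IsCompact (momentSet X ψ Q η) := by
  have continuous_moment (k : Fin K) :
      Continuous fun P : ProbabilityMeasure X => ∫ x, ψ k x ∂P.toMeasure :=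
    ProbabilityMeasure.continuous_integral_continuousMap (⟨ψ k, hψ k⟩ : C(X, ℝ))
  rw [momentSet, ofPred_forall]
  exact (isClosed_iInter fun k =>
    isClosed_le ((continuous_moment k).sub continuous_const).abs continuous_const).isCompact

end MomentSet

/-- **Theorem 1.** Minimax equals maximin for the robust Bayesian
hypothesis-testing problem over moment-constrained uncertainty sets. -/
theorem minimax_eq_maximin
    {d : ℕ} (X : Set (EuclideanSpace ℝ (Fin d))) (hX : IsCompact X)
    {K : ℕ} (ψ : Fin K → X → ℝ) (hψ : ∀ k, Continuous (ψ k))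
    (Q0 Q1 : ProbabilityMeasure X) (η : ℝ) (hη : 0 < η) :
    sInf {r : ℝ | ∃ φ : X → ℝ, Measurable φ ∧ (∀ x, φ x ∈ Set.Icc (0 : ℝ) 1) ∧
        r = sSup {e : ℝ | ∃ P0 ∈ momentSet X ψ Q0 η, ∃ P1 ∈ momentSet X ψ Q1 η,
          e = bayesError φ (P0 : Measure X) (P1 : Measure X)}} =
      sSup {r : ℝ | ∃ P0 ∈ momentSet X ψ Q0 η, ∃ P1 ∈ momentSet X ψ Q1 η,
        r = sInf {e : ℝ | ∃ φ : X → ℝ, Measurable φ ∧ (∀ x, φ x ∈ Set.Icc (0 : ℝ) 1) ∧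
          e = bayesError φ (P0 : Measure X) (P1 : Measure X)}} := by
  have : CompactSpace X := isCompact_iff_compactSpace.1 hX
  have hψint (k) (P : ProbabilityMeasure X) : Integrable (ψ k) P.toMeasure :=
    (hψ k).integrable_of_hasCompactSupport (.of_compactSpace _)
  exact minimax_eq_maximin_general
    (isCompact_momentSet hψ Q0 η) (convex_image_momentSet hψint Q0 η)
    ⟨Q0, mem_momentSet_self Q0 hη.le⟩
    (isCompact_momentSet hψ Q1 η) (convex_image_momentSet hψint Q1 η)
    ⟨Q1, mem_momentSet_self Q1 hη.le⟩
end

section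
/- The optimal minimax Bayes error of the robust hypothesis-testing problem equals half the worst-case affinity: inf_φ sup_{P_0 ∈ 𝒫_0^η, P_1 ∈ 𝒫_1^η} P_E(φ; P_0, P_1) = (1/2) sup_{P_0 ∈ 𝒫_0^η, P_1 ∈ 𝒫_1^η} (1 − TV(P_0, P_1)), where the infimum is over all measurable tests φ : X → [0,1]; equivalently, when P_0 and P_1 have densities p_0, p_1 with respect to a common reference measure μ, the right-hand side equals (1/2) sup ∫_X min{p_0(x), p_1(x)} dμ(x). -/
open MeasureTheory

/-!
Weak duality holds test by test: `∫ φ dP₁ - ∫ φ dP₀ ≤ TV(P₀, P₁)` for every `φ` with values in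
`[0, 1]`. For the converse, view the moment constraints as a single bound `‖∫ Ψ dP - ∫ Ψ dQ‖ ≤ η`
on a vector-valued moment. Since the affinity `1 - TV` is concave and the
nominal pair is a Slater point, Hahn-Banach gives a Lagrange multiplier `l` for the problem of
maximizing it, where the constraint contributes the dual norm term `η * ‖l‖`. Evaluating the
resulting inequality at Dirac masses yields functions `h₀`, `h₁` with `0 ≤ h₀ x + h₁ y` and
`1 ≤ h₀ x + h₁ x`, and the test `min (h₀ - inf h₀) 1` is then optimal.
-/

open scoped NNReal

section TotalVariation

variable {Ω : Type*} [MeasurableSpace Ω]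

lemma abs_measure_sub_le_tv (P Q : Measure Ω) [IsFiniteMeasure P] [IsFiniteMeasure Q]
    {A : Set Ω} (hA : MeasurableSet A) : |(P A).toReal - (Q A).toReal| ≤ tv P Q := by
  refine le_ciSup (f := fun A : {A : Set Ω // MeasurableSet A} =>
    |(P A.1).toReal - (Q A.1).toReal|) ⟨P.real .univ + Q.real .univ, ?_⟩ ⟨A, hA⟩
  rintro _ ⟨B, rfl⟩
  refine (abs_sub _ _).trans (add_le_add ?_ ?_) <;>
    exact (abs_of_nonneg measureReal_nonneg).trans_le (measureReal_mono B.1.subset_univ)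

lemma tv_le_of_forall {P Q : Measure Ω} {c : ℝ}
    (h : ∀ A, MeasurableSet A → |(P A).toReal - (Q A).toReal| ≤ c) : tv P Q ≤ c :=
  haveI : Nonempty {A : Set Ω // MeasurableSet A} := ⟨⟨∅, .empty⟩⟩
  ciSup_le fun A => h A.1 A.2

lemma tv_nonneg (P Q : Measure Ω) : 0 ≤ tv P Q :=
  Real.iSup_nonneg fun _ => abs_nonneg _

lemma tv_le_one (P Q : Measure Ω) [IsProbabilityMeasure P] [IsProbabilityMeasure Q] :
    tv P Q ≤ 1 :=
  tv_le_of_forall fun _ _ => abs_sub_le_of_nonneg_of_le measureReal_nonneg measureReal_le_one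
    measureReal_nonneg measureReal_le_one

lemma tv_self (P : Measure Ω) : tv P P = 0 := by
  simp [tv]

lemma tv_smul (a : ℝ≥0) (P Q : Measure Ω) : tv (a • P) (a • Q) = a * tv P Q := by
  simp only [tv, Real.mul_iSup_of_nonneg a.coe_nonneg]
  refine iSup_congr fun A => ?_
  simp [← mul_sub, abs_mul]

lemma tv_add_le (P Q P' Q' : Measure Ω) [IsFiniteMeasure P] [IsFiniteMeasure Q]
    [IsFiniteMeasure P'] [IsFiniteMeasure Q'] : tv (P + Q) (P' + Q') ≤ tv P P' + tv Q Q' := by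
  refine tv_le_of_forall fun A hA => ?_
  rw [Measure.add_apply, Measure.add_apply, ENNReal.toReal_add (by finiteness) (by finiteness),
    ENNReal.toReal_add (by finiteness) (by finiteness), add_sub_add_comm]
  exact (abs_add_le _ _).trans (add_le_add (abs_measure_sub_le_tv P P' hA)
    (abs_measure_sub_le_tv Q Q' hA))

lemma integral_sub_integral_le_tv (P Q : Measure Ω) [IsFiniteMeasure P] [IsFiniteMeasure Q]
    {φ : Ω → ℝ} (hφ : Measurable φ) (h01 : ∀ x, φ x ∈ Set.Icc (0 : ℝ) 1) :
    ∫ x, φ x ∂Q - ∫ x, φ x ∂P ≤ tv P Q := by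
  obtain ⟨s, hs⟩ := exists_isHahnDecomposition P Q
  have hint (R : Measure Ω) [IsFiniteMeasure R] : Integrable φ R :=
    .of_mem_Icc 0 1 hφ.aemeasurable (.of_forall h01)
  have on_s : ∫ x in s, (1 - φ x) ∂P ≤ ∫ x in s, (1 - φ x) ∂Q :=
    integral_mono_measure hs.le_on (.of_forall fun x => sub_nonneg.2 (h01 x).2)
      ((integrable_const 1).sub (hint _))
  have on_compl : ∫ x in sᶜ, φ x ∂Q ≤ ∫ x in sᶜ, φ x ∂P :=
    integral_mono_measure hs.ge_on_compl (.of_forall fun x => (h01 x).1) (hint _)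
  have at_s : -tv P Q ≤ P.real s - Q.real s :=
    (abs_le.1 (abs_measure_sub_le_tv P Q hs.measurableSet)).1
  rw [integral_sub (integrable_const 1) (hint _), integral_sub (integrable_const 1) (hint _)]
    at on_s
  simp only [integral_const, measureReal_restrict_apply_univ, smul_eq_mul, mul_one] at on_s
  rw [← integral_add_compl hs.measurableSet (hint P),
    ← integral_add_compl hs.measurableSet (hint Q)]
  linarith

end TotalVariation

section BayesError

variable {Ω : Type*} [MeasurableSpace Ω] {φ : Ω → ℝ}

lemma half_affinity_le_bayesError (P₀ P₁ : Measure Ω) [IsFiniteMeasure P₀]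
    [IsProbabilityMeasure P₁] (hφ : Measurable φ) (h01 : ∀ x, φ x ∈ Set.Icc (0 : ℝ) 1) :
    1 / 2 * (1 - tv P₀ P₁) ≤ bayesError φ P₀ P₁ := by
  have h := integral_sub_integral_le_tv P₀ P₁ hφ h01
  have hint : Integrable φ P₁ := .of_mem_Icc 0 1 hφ.aemeasurable (.of_forall h01)
  rw [bayesError, integral_sub (integrable_const 1) hint]
  simp only [integral_const, probReal_univ, smul_eq_mul, mul_one]
  linarith

lemma bayesError_nonneg (P₀ P₁ : Measure Ω) (h01 : ∀ x, φ x ∈ Set.Icc (0 : ℝ) 1) :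
    0 ≤ bayesError φ P₀ P₁ := by
  have h₀ : 0 ≤ ∫ x, φ x ∂P₀ := integral_nonneg fun x => (h01 x).1
  have h₁ : 0 ≤ ∫ x, (1 - φ x) ∂P₁ := integral_nonneg fun x => sub_nonneg.2 (h01 x).2
  rw [bayesError]
  positivity

lemma bayesError_le_one (P₀ P₁ : Measure Ω) [IsProbabilityMeasure P₀] [IsProbabilityMeasure P₁]
    (h01 : ∀ x, φ x ∈ Set.Icc (0 : ℝ) 1) : bayesError φ P₀ P₁ ≤ 1 := by
  have h₀ : ∫ x, φ x ∂P₀ ≤ ∫ _, 1 ∂P₀ :=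
    integral_mono_of_nonneg (.of_forall fun x => (h01 x).1) (integrable_const 1)
      (.of_forall fun x => (h01 x).2)
  have h₁ : ∫ x, (1 - φ x) ∂P₁ ≤ ∫ _, 1 ∂P₁ :=
    integral_mono_of_nonneg (.of_forall fun x => sub_nonneg.2 (h01 x).2) (integrable_const 1)
      (.of_forall fun x => sub_le_self 1 (h01 x).1)
  simp only [integral_const, probReal_univ, smul_eq_mul, mul_one] at h₀ h₁
  rw [bayesError]
  linarith

/-- The supremum of the Bayes error of the test `φ` over two families of hypotheses. -/
noncomputable def supBayesError (φ : Ω → ℝ) (𝒫₀ 𝒫₁ : Set (ProbabilityMeasure Ω)) : ℝ :=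
  sSup {e : ℝ | ∃ P₀ ∈ 𝒫₀, ∃ P₁ ∈ 𝒫₁, e = bayesError φ (P₀ : Measure Ω) (P₁ : Measure Ω)}

/-- The supremum of the affinity `1 - TV(P₀, P₁)` over two families of hypotheses. -/
noncomputable def supAffinity (𝒫₀ 𝒫₁ : Set (ProbabilityMeasure Ω)) : ℝ :=
  sSup {r : ℝ | ∃ P₀ ∈ 𝒫₀, ∃ P₁ ∈ 𝒫₁, r = 1 - tv (P₀ : Measure Ω) (P₁ : Measure Ω)}

variable {𝒫₀ 𝒫₁ : Set (ProbabilityMeasure Ω)}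

lemma affinity_le_supAffinity {P₀ P₁ : ProbabilityMeasure Ω} (h₀ : P₀ ∈ 𝒫₀) (h₁ : P₁ ∈ 𝒫₁) :
    1 - tv (P₀ : Measure Ω) (P₁ : Measure Ω) ≤ supAffinity 𝒫₀ 𝒫₁ := by
  refine le_csSup ⟨1, ?_⟩ ⟨P₀, h₀, P₁, h₁, rfl⟩
  rintro _ ⟨P₀, -, P₁, -, rfl⟩
  exact sub_le_self 1 (tv_nonneg _ _)

lemma supAffinity_nonneg (𝒫₀ 𝒫₁ : Set (ProbabilityMeasure Ω)) : 0 ≤ supAffinity 𝒫₀ 𝒫₁ := by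
  refine Real.sSup_nonneg ?_
  rintro _ ⟨P₀, -, P₁, -, rfl⟩
  exact sub_nonneg.2 (tv_le_one _ _)

lemma bayesError_le_supBayesError (h01 : ∀ x, φ x ∈ Set.Icc (0 : ℝ) 1)
    {P₀ P₁ : ProbabilityMeasure Ω} (h₀ : P₀ ∈ 𝒫₀) (h₁ : P₁ ∈ 𝒫₁) :
    bayesError φ (P₀ : Measure Ω) (P₁ : Measure Ω) ≤ supBayesError φ 𝒫₀ 𝒫₁ := by
  refine le_csSup ⟨1, ?_⟩ ⟨P₀, h₀, P₁, h₁, rfl⟩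
  rintro _ ⟨P₀, -, P₁, -, rfl⟩
  exact bayesError_le_one _ _ h01

lemma supBayesError_le {c : ℝ} (hc : 0 ≤ c) (h : ∀ P₀ ∈ 𝒫₀, ∀ P₁ ∈ 𝒫₁,
    bayesError φ (P₀ : Measure Ω) (P₁ : Measure Ω) ≤ c) : supBayesError φ 𝒫₀ 𝒫₁ ≤ c := by
  refine Real.sSup_le ?_ hc
  rintro _ ⟨P₀, h₀, P₁, h₁, rfl⟩
  exact h P₀ h₀ P₁ h₁

lemma half_supAffinity_le_supBayesError (hφ : Measurable φ)
    (h01 : ∀ x, φ x ∈ Set.Icc (0 : ℝ) 1) (𝒫₀ 𝒫₁ : Set (ProbabilityMeasure Ω)) :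
    1 / 2 * supAffinity 𝒫₀ 𝒫₁ ≤ supBayesError φ 𝒫₀ 𝒫₁ := by
  have hnonneg : 0 ≤ supBayesError φ 𝒫₀ 𝒫₁ := Real.sSup_nonneg <| by
    rintro _ ⟨P₀, -, P₁, -, rfl⟩
    exact bayesError_nonneg _ _ h01
  rw [← le_div_iff₀' (by norm_num)]
  refine Real.sSup_le ?_ (by positivity)
  rintro _ ⟨P₀, h₀, P₁, h₁, rfl⟩
  rw [le_div_iff₀' (by norm_num)]
  exact (half_affinity_le_bayesError _ _ hφ h01).trans (bayesError_le_supBayesError h01 h₀ h₁)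

lemma exists_test_bayesError_le_integral {h₀ h₁ : Ω → ℝ} (hmeas : Measurable h₀)
    (hpair : ∀ x y, 0 ≤ h₀ x + h₁ y) (hdiag : ∀ x, 1 ≤ h₀ x + h₁ x) :
    ∃ φ : Ω → ℝ, Measurable φ ∧ (∀ x, φ x ∈ Set.Icc (0 : ℝ) 1) ∧
      ∀ (P₀ P₁ : Measure Ω) [IsProbabilityMeasure P₀] [IsProbabilityMeasure P₁],
        Integrable h₀ P₀ → Integrable h₁ P₁ →
          bayesError φ P₀ P₁ ≤ 1 / 2 * (∫ x, h₀ x ∂P₀ + ∫ x, h₁ x ∂P₁) := by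
  set c : ℝ := ⨅ x, h₀ x
  have hc_le (x : Ω) : c ≤ h₀ x :=
    ciInf_le ⟨-h₁ x, by rintro _ ⟨y, rfl⟩; linarith [hpair y x]⟩ x
  have hc_ge (x : Ω) : -h₁ x ≤ c :=
    haveI : Nonempty Ω := ⟨x⟩
    le_ciInf fun y => by linarith [hpair y x]
  have h01 (x : Ω) : min (h₀ x - c) 1 ∈ Set.Icc (0 : ℝ) 1 :=
    ⟨le_min (sub_nonneg.2 (hc_le x)) zero_le_one, min_le_right _ _⟩
  refine ⟨fun x => min (h₀ x - c) 1, by fun_prop, h01, fun P₀ P₁ _ _ hint₀ hint₁ => ?_⟩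
  have type_one : ∫ x, min (h₀ x - c) 1 ∂P₀ ≤ ∫ x, (h₀ x - c) ∂P₀ :=
    integral_mono_of_nonneg (.of_forall fun x => (h01 x).1) (hint₀.sub (integrable_const c))
      (.of_forall fun x => min_le_left _ _)
  have type_two : ∫ x, (1 - min (h₀ x - c) 1) ∂P₁ ≤ ∫ x, (h₁ x + c) ∂P₁ := by
    refine integral_mono_of_nonneg (.of_forall fun x => sub_nonneg.2 (h01 x).2)
      (hint₁.add (integrable_const c)) (.of_forall fun x => ?_)
    have : 1 - (h₁ x + c) ≤ min (h₀ x - c) 1 :=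
      le_min (by linarith [hdiag x]) (by linarith [hc_ge x])
    linarith
  rw [integral_sub hint₀ (integrable_const c)] at type_one
  rw [integral_add hint₁ (integrable_const c)] at type_two
  simp only [integral_const, probReal_univ, smul_eq_mul, one_mul] at type_one type_two
  rw [bayesError]
  linarith

end BayesError

section LagrangeMultiplier

variable {E : Type*} [NormedAddCommGroup E] [NormedSpace ℝ E]

lemma mul_norm_le_of_forall_mem_closedBall {m : StrongDual ℝ E} {η b : ℝ} (hη : 0 < η)
    (h : ∀ v ∈ Metric.closedBall (0 : E) η, m v ≤ b) : η * ‖m‖ ≤ b := by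
  rw [← le_div_iff₀' hη]
  refine m.opNorm_bound_of_ball_bound hη b fun v hv => abs_le'.2 ⟨h v hv, ?_⟩
  rw [← m.map_neg]
  exact h (-v) (by simpa using hv)

lemma exists_lagrange_multiplier_of_convex {H : Set (ℝ × E)} (hH : Convex ℝ H) {η V t₀ : ℝ}
    (hη : 0 < η) (ht₀ : (t₀, 0) ∈ H) (hV : ∀ t u, (t, u) ∈ H → ‖u‖ < η → t ≤ V) :
    ∃ l : StrongDual ℝ E, ∀ t u, (t, u) ∈ H → t + η * ‖l‖ ≤ V + l u := by
  have hdisj : Disjoint (Set.Ioi V ×ˢ Metric.ball (0 : E) η) H :=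
    Set.disjoint_left.2 fun ⟨t, u⟩ ⟨ht, hu⟩ htu =>
      (hV t u htu (mem_ball_zero_iff.1 hu)).not_gt ht
  obtain ⟨f, γ, hlt, hge⟩ := geometric_hahn_banach_open
    ((convex_Ioi V).prod (convex_ball 0 η)) (isOpen_Ioi.prod Metric.isOpen_ball) hH hdisj
  set c : ℝ := f (1, 0)
  set m : StrongDual ℝ E := f.comp (.inr ℝ ℝ E)
  have hf (t : ℝ) (u : E) : f (t, u) = t * c + m u := by
    have : ((t, u) : ℝ × E) = t • (1, 0) + (0, u) := by simp
    rw [this, map_add, map_smul, smul_eq_mul]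
    rfl
  have hc : c < 0 := by
    have hsep := (hlt (max V t₀ + 1, 0)
      ⟨(le_max_left V t₀).trans_lt (lt_add_one _), Metric.mem_ball_self hη⟩).trans_le (hge _ ht₀)
    rw [hf, hf] at hsep
    nlinarith [le_max_right V t₀]
  have hclosure (v : E) (hv : v ∈ Metric.closedBall (0 : E) η) : f (V, v) ≤ γ := by
    refine le_on_closure (s := Set.Ioi V ×ˢ Metric.ball (0 : E) η) (fun z hz => (hlt z hz).le)
      f.continuous.continuousOn continuousOn_const ?_
    rw [closure_prod_eq, closure_Ioi, closure_ball 0 hη.ne']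
    exact ⟨Set.self_mem_Ici, hv⟩
  have hnorm : η * ‖m‖ ≤ γ - V * c :=
    mul_norm_le_of_forall_mem_closedBall hη fun v hv => by linarith [hclosure v hv, hf V v]
  obtain ⟨l, hl⟩ : ∃ l : StrongDual ℝ E, m = (-c) • l :=
    ⟨(-c)⁻¹ • m, (smul_inv_smul₀ (neg_ne_zero.2 hc.ne) m).symm⟩
  rw [hl, norm_smul, Real.norm_of_nonneg (neg_nonneg.2 hc.le)] at hnorm
  refine ⟨l, fun t u htu => le_of_mul_le_mul_left ?_ (neg_pos.2 hc)⟩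
  have hsep : γ ≤ t * c + -c * l u := by
    simpa only [hf, hl, smul_apply, smul_eq_mul] using hge _ htu
  linarith

end LagrangeMultiplier

section MomentBall

variable {Ω : Type*} [MeasurableSpace Ω] {E : Type*} [NormedAddCommGroup E] [NormedSpace ℝ E]

/-- The probability measures whose `Ψ`-moment is within `η` of that of `Q`. The moment map is
vector-valued: real moments `ψ k`, `k < K`, correspond to `E = (Fin K → ℝ)`, whose norm is the sup
norm. -/
def momentBall (Ψ : Ω → E) (Q : ProbabilityMeasure Ω) (η : ℝ) : Set (ProbabilityMeasure Ω) :=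
  {P | ‖∫ x, Ψ x ∂(P : Measure Ω) - ∫ x, Ψ x ∂(Q : Measure Ω)‖ ≤ η}

/-- The hypograph of the affinity in terms of moments: `(t, u₀, u₁)` belongs to it when some pair
of hypotheses with moments `q₀ + u₀` and `q₁ + u₁` has affinity at least `t`. -/
def affinityHypograph (Ψ : Ω → E) (q₀ q₁ : E) : Set (ℝ × E × E) :=
  {z | ∃ P₀ P₁ : ProbabilityMeasure Ω, z.1 ≤ 1 - tv (P₀ : Measure Ω) (P₁ : Measure Ω) ∧
    z.2.1 = ∫ x, Ψ x ∂(P₀ : Measure Ω) - q₀ ∧ z.2.2 = ∫ x, Ψ x ∂(P₁ : Measure Ω) - q₁}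

lemma isProbabilityMeasure_smul_add_smul (P Q : Measure Ω) [IsProbabilityMeasure P]
    [IsProbabilityMeasure Q] {a b : ℝ≥0} (hab : a + b = 1) :
    IsProbabilityMeasure (a • P + b • Q) :=
  ⟨by
    rw [Measure.add_apply, Measure.smul_apply, Measure.smul_apply, measure_univ, measure_univ,
      ← add_smul, hab, one_smul]⟩

lemma integral_smul_add_smul_measure {P Q : Measure Ω} {Ψ : Ω → E} (hP : Integrable Ψ P)
    (hQ : Integrable Ψ Q) (a b : ℝ≥0) :
    ∫ x, Ψ x ∂(a • P + b • Q) = (a : ℝ) • ∫ x, Ψ x ∂P + (b : ℝ) • ∫ x, Ψ x ∂Q := by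
  rw [integral_add_measure hP.smul_measure_nnreal hQ.smul_measure_nnreal,
    integral_smul_nnreal_measure, integral_smul_nnreal_measure, NNReal.smul_def, NNReal.smul_def]

lemma convex_affinityHypograph {Ψ : Ω → E}
    (hint : ∀ P : ProbabilityMeasure Ω, Integrable Ψ (P : Measure Ω)) (q₀ q₁ : E) :
    Convex ℝ (affinityHypograph Ψ q₀ q₁) := by
  rintro ⟨t, u₀, u₁⟩ ⟨P₀, P₁, ht, rfl, rfl⟩ ⟨t', u₀', u₁'⟩ ⟨P₀', P₁', ht', rfl, rfl⟩ a b ha hb hab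
  lift a to ℝ≥0 using ha
  lift b to ℝ≥0 using hb
  have hmoment (P P' : ProbabilityMeasure Ω) (q : E) :
      (a : ℝ) • (∫ x, Ψ x ∂(P : Measure Ω) - q) + (b : ℝ) • (∫ x, Ψ x ∂(P' : Measure Ω) - q) =
        ∫ x, Ψ x ∂(a • (P : Measure Ω) + b • (P' : Measure Ω)) - q := by
    rw [integral_smul_add_smul_measure (hint P) (hint P'), smul_sub, smul_sub, sub_add_sub_comm,
      ← add_smul, hab, one_smul]
  have htv := (tv_add_le (a • (P₀ : Measure Ω)) (b • (P₀' : Measure Ω)) (a • (P₁ : Measure Ω))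
    (b • (P₁' : Measure Ω))).trans_eq (congrArg₂ _ (tv_smul a _ _) (tv_smul b _ _))
  have hab' : a + b = 1 := mod_cast hab
  refine ⟨⟨_, isProbabilityMeasure_smul_add_smul P₀ P₀' hab'⟩,
    ⟨_, isProbabilityMeasure_smul_add_smul P₁ P₁' hab'⟩, ?_, hmoment _ _ _, hmoment _ _ _⟩
  calc (a : ℝ) * t + b * t'
    _ ≤ a * (1 - tv (P₀ : Measure Ω) P₁) + b * (1 - tv (P₀' : Measure Ω) P₁') := by gcongr
    _ = 1 - (a * tv (P₀ : Measure Ω) P₁ + b * tv (P₀' : Measure Ω) P₁') := by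
      linear_combination hab
    _ ≤ _ := sub_le_sub_left htv 1

variable {Ψ : Ω → E} {Q₀ Q₁ : ProbabilityMeasure Ω} {η : ℝ}

lemma exists_lagrange_multiplier_supAffinity
    (hint : ∀ P : ProbabilityMeasure Ω, Integrable Ψ (P : Measure Ω)) (hη : 0 < η) :
    ∃ l : StrongDual ℝ (E × E), ∀ P₀ P₁ : ProbabilityMeasure Ω,
      1 - tv (P₀ : Measure Ω) (P₁ : Measure Ω) + η * ‖l‖ ≤
        supAffinity (momentBall Ψ Q₀ η) (momentBall Ψ Q₁ η) +
          l (∫ x, Ψ x ∂(P₀ : Measure Ω) - ∫ x, Ψ x ∂(Q₀ : Measure Ω),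
            ∫ x, Ψ x ∂(P₁ : Measure Ω) - ∫ x, Ψ x ∂(Q₁ : Measure Ω)) := by
  obtain ⟨l, hl⟩ := exists_lagrange_multiplier_of_convex
    (convex_affinityHypograph hint (∫ x, Ψ x ∂(Q₀ : Measure Ω)) (∫ x, Ψ x ∂(Q₁ : Measure Ω)))
    (V := supAffinity (momentBall Ψ Q₀ η) (momentBall Ψ Q₁ η)) hη
    ⟨Q₀, Q₁, le_rfl, (sub_self _).symm, (sub_self _).symm⟩ <| by
      rintro t ⟨u₀, u₁⟩ ⟨P₀, P₁, ht, rfl, rfl⟩ hu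
      obtain ⟨hu₀, hu₁⟩ := max_lt_iff.1 hu
      exact ht.trans (affinity_le_supAffinity hu₀.le hu₁.le)
  exact ⟨l, fun P₀ P₁ => hl _ _ ⟨P₀, P₁, le_rfl, rfl, rfl⟩⟩

lemma integral_clm_sub_const [CompleteSpace E] {P : Measure Ω} [IsProbabilityMeasure P]
    (hΨ : Integrable Ψ P) (l : StrongDual ℝ E) (q : E) :
    ∫ x, l (Ψ x - q) ∂P = l (∫ x, Ψ x ∂P - q) := by
  have hcomm := l.integral_comp_comm (hΨ.sub (integrable_const q))
  simpa [Pi.sub_apply, integral_sub hΨ (integrable_const q)] using hcomm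

lemma exists_dual_functions_supAffinity [CompleteSpace E] (hΨ : StronglyMeasurable Ψ)
    (hint : ∀ P : ProbabilityMeasure Ω, Integrable Ψ (P : Measure Ω)) (hη : 0 < η) :
    ∃ h₀ h₁ : Ω → ℝ, (Measurable h₀ ∧ Measurable h₁) ∧
      (∀ P : ProbabilityMeasure Ω, Integrable h₀ (P : Measure Ω) ∧ Integrable h₁ (P : Measure Ω)) ∧
      (∀ P₀ P₁ : ProbabilityMeasure Ω, 1 - tv (P₀ : Measure Ω) (P₁ : Measure Ω) ≤
        ∫ x, h₀ x ∂(P₀ : Measure Ω) + ∫ x, h₁ x ∂(P₁ : Measure Ω)) ∧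
      ∀ P₀ ∈ momentBall Ψ Q₀ η, ∀ P₁ ∈ momentBall Ψ Q₁ η,
        ∫ x, h₀ x ∂(P₀ : Measure Ω) + ∫ x, h₁ x ∂(P₁ : Measure Ω) ≤
          supAffinity (momentBall Ψ Q₀ η) (momentBall Ψ Q₁ η) := by
  obtain ⟨l, hl⟩ := exists_lagrange_multiplier_supAffinity (Q₀ := Q₀) (Q₁ := Q₁) hint hη
  set V := supAffinity (momentBall Ψ Q₀ η) (momentBall Ψ Q₁ η)
  set q₀ := ∫ x, Ψ x ∂(Q₀ : Measure Ω)
  set q₁ := ∫ x, Ψ x ∂(Q₁ : Measure Ω)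
  have hmeas (m : StrongDual ℝ E) (q : E) : Measurable fun x => m (Ψ x - q) :=
    (m.continuous.comp_stronglyMeasurable (hΨ.sub stronglyMeasurable_const)).measurable
  have hintegrable (m : StrongDual ℝ E) (q : E) (P : ProbabilityMeasure Ω) :
      Integrable (fun x => m (Ψ x - q)) (P : Measure Ω) :=
    m.integrable_comp ((hint P).sub (integrable_const q))
  have hsum (P₀ P₁ : ProbabilityMeasure Ω) :
      ∫ x, (V - η * ‖l‖ + l.comp (.inl ℝ E E) (Ψ x - q₀)) ∂(P₀ : Measure Ω) +
          ∫ x, l.comp (.inr ℝ E E) (Ψ x - q₁) ∂(P₁ : Measure Ω) =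
        V - η * ‖l‖ + l (∫ x, Ψ x ∂(P₀ : Measure Ω) - q₀, ∫ x, Ψ x ∂(P₁ : Measure Ω) - q₁) := by
    rw [integral_add (integrable_const _) (hintegrable _ q₀ P₀), integral_clm_sub_const (hint P₀),
      integral_clm_sub_const (hint P₁), integral_const, probReal_univ, one_smul, add_assoc,
      ← l.comp_inl_add_comp_inr]
  refine ⟨fun x => V - η * ‖l‖ + l.comp (.inl ℝ E E) (Ψ x - q₀),
    fun x => l.comp (.inr ℝ E E) (Ψ x - q₁), ⟨(hmeas _ q₀).const_add _, hmeas _ q₁⟩,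
    fun P => ⟨(integrable_const _).add (hintegrable _ q₀ P), hintegrable _ q₁ P⟩,
    fun P₀ P₁ => ?_, fun P₀ h₀ P₁ h₁ => ?_⟩
  · rw [hsum]
    linarith [hl P₀ P₁]
  · have hle : l (∫ x, Ψ x ∂(P₀ : Measure Ω) - q₀, ∫ x, Ψ x ∂(P₁ : Measure Ω) - q₁) ≤ ‖l‖ * η :=
      (le_abs_self _).trans (l.le_opNorm_of_le (max_le h₀ h₁))
    rw [hsum]
    linarith

lemma exists_test_supBayesError_le_half_supAffinity [CompleteSpace E] (hΨ : StronglyMeasurable Ψ)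
    (hint : ∀ P : ProbabilityMeasure Ω, Integrable Ψ (P : Measure Ω)) (hη : 0 < η) :
    ∃ φ : Ω → ℝ, Measurable φ ∧ (∀ x, φ x ∈ Set.Icc (0 : ℝ) 1) ∧
      supBayesError φ (momentBall Ψ Q₀ η) (momentBall Ψ Q₁ η) ≤
        1 / 2 * supAffinity (momentBall Ψ Q₀ η) (momentBall Ψ Q₁ η) := by
  obtain ⟨h₀, h₁, ⟨hmeas₀, hmeas₁⟩, hh, hdual, hsup⟩ :=
    exists_dual_functions_supAffinity (Q₀ := Q₀) (Q₁ := Q₁) hΨ hint hη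
  have hdirac (x y : Ω) : 1 - tv (.dirac x) (.dirac y) ≤ h₀ x + h₁ y := by
    simpa only [ProbabilityMeasure.coe_mk, integral_dirac' _ _ hmeas₀.stronglyMeasurable,
      integral_dirac' _ _ hmeas₁.stronglyMeasurable]
      using hdual ⟨.dirac x, inferInstance⟩ ⟨.dirac y, inferInstance⟩
  obtain ⟨φ, hφ, h01, hle⟩ := exists_test_bayesError_le_integral hmeas₀
    (fun x y => (sub_nonneg.2 (tv_le_one _ _)).trans (hdirac x y))
    (fun x => by simpa [tv_self] using hdirac x x)
  refine ⟨φ, hφ, h01, supBayesError_le (mul_nonneg (by norm_num) (supAffinity_nonneg _ _))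
    fun P₀ hP₀ P₁ hP₁ => ?_⟩
  exact (hle P₀ P₁ (hh P₀).1 (hh P₁).2).trans
    (mul_le_mul_of_nonneg_left (hsup P₀ hP₀ P₁ hP₁) (by norm_num))

end MomentBall

lemma momentSet_eq_momentBall {d : ℕ} {X : Set (EuclideanSpace ℝ (Fin d))} {K : ℕ}
    {ψ : Fin K → X → ℝ} (hψ : ∀ k (P : ProbabilityMeasure X), Integrable (ψ k) (P : Measure X))
    (Q : ProbabilityMeasure X) {η : ℝ} (hη : 0 ≤ η) :
    momentSet X ψ Q η = momentBall (fun x k => ψ k x) Q η := by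
  ext P
  have heval (P : ProbabilityMeasure X) (k : Fin K) :
      (∫ x, (fun k => ψ k x) ∂(P : Measure X)) k = ∫ x, ψ k x ∂(P : Measure X) :=
    eval_integral (fun k => hψ k P) k
  simp only [momentSet, momentBall, Set.mem_ofPred_eq, pi_norm_le_iff_of_nonneg hη, Pi.sub_apply,
    heval, Real.norm_eq_abs]

theorem minimax_eq_half_sup_affinity_general {Ω : Type*} [MeasurableSpace Ω] {E : Type*}
    [NormedAddCommGroup E] [NormedSpace ℝ E] [CompleteSpace E] {Ψ : Ω → E}
    (hΨ : StronglyMeasurable Ψ) (hΨ_bdd : Bornology.IsBounded (Set.range Ψ))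
    (Q₀ Q₁ : ProbabilityMeasure Ω) {η : ℝ} (hη : 0 < η) :
    IsLeast {r : ℝ | ∃ φ : Ω → ℝ, Measurable φ ∧ (∀ x, φ x ∈ Set.Icc (0 : ℝ) 1) ∧
        r = supBayesError φ (momentBall Ψ Q₀ η) (momentBall Ψ Q₁ η)}
      (1 / 2 * supAffinity (momentBall Ψ Q₀ η) (momentBall Ψ Q₁ η)) := by
  obtain ⟨C, hC⟩ := hΨ_bdd.exists_norm_le
  have hint (P : ProbabilityMeasure Ω) : Integrable Ψ (P : Measure Ω) :=
    .of_bound hΨ.aestronglyMeasurable C (.of_forall fun x => hC _ ⟨x, rfl⟩)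
  obtain ⟨φ, hφ, h01, hle⟩ := exists_test_supBayesError_le_half_supAffinity hΨ hint hη
  refine ⟨⟨φ, hφ, h01, (half_supAffinity_le_supBayesError hφ h01 _ _).antisymm hle⟩, ?_⟩
  rintro _ ⟨φ, hφ, h01, rfl⟩
  exact half_supAffinity_le_supBayesError hφ h01 _ _

/-- The optimal minimax Bayes error equals half the worst-case
affinity `1 − TV(P₀, P₁)` over the uncertainty sets. -/
theorem minimax_eq_half_sup_affinity
    {d : ℕ} (X : Set (EuclideanSpace ℝ (Fin d))) (hX : IsCompact X)
    {K : ℕ} (ψ : Fin K → X → ℝ) (hψ : ∀ k, Continuous (ψ k))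
    (Q0 Q1 : ProbabilityMeasure X) (η : ℝ) (hη : 0 < η) :
    sInf {r : ℝ | ∃ φ : X → ℝ, Measurable φ ∧ (∀ x, φ x ∈ Set.Icc (0 : ℝ) 1) ∧
        r = sSup {e : ℝ | ∃ P0 ∈ momentSet X ψ Q0 η, ∃ P1 ∈ momentSet X ψ Q1 η,
          e = bayesError φ (P0 : Measure X) (P1 : Measure X)}} =
      (1 / 2) * sSup {r : ℝ | ∃ P0 ∈ momentSet X ψ Q0 η, ∃ P1 ∈ momentSet X ψ Q1 η,
        r = 1 - tv (P0 : Measure X) (P1 : Measure X)} := by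
  have : CompactSpace X := isCompact_iff_compactSpace.1 hX
  have hΨ : Continuous fun x k => ψ k x := continuous_pi hψ
  have hint (k : Fin K) (P : ProbabilityMeasure X) : Integrable (ψ k) (P : Measure X) :=
    (hψ k).integrable_of_hasCompactSupport (.of_compactSpace _)
  rw [momentSet_eq_momentBall hint Q0 hη.le, momentSet_eq_momentBall hint Q1 hη.le]
  exact (minimax_eq_half_sup_affinity_general hΨ.stronglyMeasurable
    (isCompact_range hΨ).isBounded Q0 Q1 hη).csInf_eq
end

section
/- Let x_1,…,x_s be i.i.d. samples from a probability measure P_0 on X, suppose sup_{x∈X} |ψ_k(x)| ≤ M for all k, and let P̂_s be the empirical distribution of the samples. Assume D(P_0) := Σ_{k=1}^K [(E_{Q̂_1}[ψ_k] − E_{P_0}[ψ_k])² − (E_{Q̂_0}[ψ_k] − E_{P_0}[ψ_k])²] > 0. Then P_0^{⊗s}( Σ_k |E_{P̂_s}[ψ_k] − E_{Q̂_0}[ψ_k]|² ≥ Σ_k |E_{P̂_s}[ψ_k] − E_{Q̂_1}[ψ_k]|² ) ≤ exp( − s D(P_0)² / (8 M² (Σ_k |E_{Q̂_1}[ψ_k]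 − E_{Q̂_0}[ψ_k]|)²) ). -/
open MeasureTheory

/-! Write `a`, `b` for the moment vectors of `Q̂₀`, `Q̂₁`. The squared terms cancel in
`∑ k, ((z k - b k) ^ 2 - (z k - a k) ^ 2)`, which is therefore affine in `z`. Since its value at
the moments of `P₀` is `D`, the empirical moments are at least as close to `b` as to `a` exactly
when the empirical mean of the single bounded function `∑ k, 2 * (b k - a k) * ψ k` exceeds its
expectation by at least `D`, and Hoeffding's inequality bounds the probability of this. -/

section Hoeffding

open ProbabilityTheory BigOperators

variable {Ω : Type*} {mΩ : MeasurableSpace Ω} {μ : Measure Ω}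

lemma hasSubgaussianMGF_sub_integral_of_abs_le [IsProbabilityMeasure μ] {X : Ω → ℝ} {B : ℝ}
    (hX : AEMeasurable X μ) (hB : ∀ᵐ ω ∂μ, |X ω| ≤ B) :
    HasSubgaussianMGF (fun ω => X ω - μ[X]) (‖B‖₊ ^ 2) μ := by
  have h_width : ‖B - -B‖₊ / 2 = ‖B‖₊ := by
    rw [sub_neg_eq_add, ← two_mul, nnnorm_mul, Real.nnnorm_ofNat,
      mul_div_cancel_left₀ _ two_ne_zero]
  simpa only [h_width] using hasSubgaussianMGF_of_mem_Icc hX (hB.mono fun _ => abs_le.mp)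

lemma measureReal_sum_sub_integral_ge_le_of_iIndepFun {ι : Type*} {X : ι → Ω → ℝ} {B : ι → ℝ}
    {s : Finset ι} (h_indep : iIndepFun X μ) (hX : ∀ i ∈ s, AEMeasurable (X i) μ)
    (hB : ∀ i ∈ s, ∀ᵐ ω ∂μ, |X i ω| ≤ B i) {ε : ℝ} (hε : 0 ≤ ε) :
    μ.real {ω | ε ≤ ∑ i ∈ s, (X i ω - μ[X i])} ≤
      Real.exp (-ε ^ 2 / (2 * ∑ i ∈ s, B i ^ 2)) := by
  have := h_indep.isProbabilityMeasure
  have h_centered : iIndepFun (fun i ω => X i ω - μ[X i]) μ :=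
    h_indep.comp (fun i (x : ℝ) => x - ∫ ω, X i ω ∂μ) fun _ => measurable_id.sub_const _
  simpa using HasSubgaussianMGF.measure_sum_ge_le_of_iIndepFun h_centered
    (fun i hi => hasSubgaussianMGF_sub_integral_of_abs_le (hX i hi) (hB i hi)) hε

variable {α J : Type*} [MeasurableSpace α] [Fintype J] [Nonempty J] {P : Measure α}
  {Y : J → Ω → α}

lemma measureReal_expect_sub_integral_ge_le_of_iIndepFun (h_indep : iIndepFun Y μ)
    (hY : ∀ j, HasLaw (Y j) P μ) {f : α → ℝ} (hf : AEMeasurable f P) {B : ℝ}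
    (hB : ∀ᵐ x ∂P, |f x| ≤ B) {t : ℝ} (ht : 0 ≤ t) :
    μ.real {ω | t ≤ 𝔼 j, f (Y j ω) - ∫ x, f x ∂P} ≤
      Real.exp (-(Fintype.card J * t ^ 2) / (2 * B ^ 2)) := by
  have hn : (0 : ℝ) < Fintype.card J := by exact_mod_cast Fintype.card_pos
  have hf_map (j : J) : AEMeasurable f (μ.map (Y j)) := by rwa [(hY j).map_eq]
  have hB_map (j : J) : ∀ᵐ ω ∂μ, |f (Y j ω)| ≤ B :=
    ae_of_ae_map (hY j).aemeasurable (by rwa [(hY j).map_eq])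
  have h_mean (j : J) : ∫ ω, f (Y j ω) ∂μ = ∫ x, f x ∂P :=
    (hY j).integral_comp hf.aestronglyMeasurable
  have h_sum (ω : Ω) : ∑ j, (f (Y j ω) - ∫ ω, f (Y j ω) ∂μ) =
      Fintype.card J * (𝔼 j, f (Y j ω) - ∫ x, f x ∂P) := by
    simp only [h_mean, mul_sub, Fintype.card_mul_expect, Finset.sum_sub_distrib, Finset.sum_const,
      Finset.card_univ, nsmul_eq_mul]
  have h_tail := measureReal_sum_sub_integral_ge_le_of_iIndepFun (s := Finset.univ)
    (h_indep.comp₀ (fun _ => f) (fun j => (hY j).aemeasurable) hf_map)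
    (fun j _ => (hf_map j).comp_aemeasurable (hY j).aemeasurable) (fun j _ => hB_map j)
    (mul_nonneg hn.le ht)
  simp only [Function.comp_apply, h_sum, mul_le_mul_iff_right₀ hn] at h_tail
  refine h_tail.trans_eq (congrArg Real.exp ?_)
  simp only [Finset.sum_const, Finset.card_univ, nsmul_eq_mul]
  field_simp

variable {ι : Type*} [Fintype ι] {ψ : ι → α → ℝ} {M : ℝ}

lemma measureReal_sum_mul_expect_sub_integral_ge_le_of_iIndepFun (h_indep : iIndepFun Y μ)
    (hY : ∀ j, HasLaw (Y j) P μ) (hψ : ∀ k, AEMeasurable (ψ k) P)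
    (hM : ∀ k, ∀ᵐ x ∂P, |ψ k x| ≤ M) (w : ι → ℝ) {t : ℝ} (ht : 0 ≤ t) :
    μ.real {ω | t ≤ ∑ k, w k * (𝔼 j, ψ k (Y j ω) - ∫ x, ψ k x ∂P)} ≤
      Real.exp (-(Fintype.card J * t ^ 2) / (2 * (M * ∑ k, |w k|) ^ 2)) := by
  have := h_indep.isProbabilityMeasure
  have : IsProbabilityMeasure P :=
    (hY (Classical.arbitrary J)).isProbabilityMeasure_iff.mp inferInstance
  have h_meas : AEMeasurable (fun x => ∑ k, w k * ψ k x) P := by fun_prop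
  have h_bound : ∀ᵐ x ∂P, |∑ k, w k * ψ k x| ≤ M * ∑ k, |w k| := by
    filter_upwards [ae_all_iff.mpr hM] with x hx
    calc |∑ k, w k * ψ k x| ≤ ∑ k, |w k * ψ k x| := Finset.abs_sum_le_sum_abs _ _
      _ ≤ ∑ k, M * |w k| := Finset.sum_le_sum fun k _ => by
        rw [abs_mul, mul_comm]
        exact mul_le_mul_of_nonneg_right (hx k) (abs_nonneg _)
      _ = M * ∑ k, |w k| := (Finset.mul_sum _ _ _).symm
  have h_integral : ∫ x, ∑ k, w k * ψ k x ∂P = ∑ k, w k * ∫ x, ψ k x ∂P := by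
    rw [integral_finsetSum _ fun k _ =>
      (Integrable.of_bound (hψ k).aestronglyMeasurable M (hM k)).const_mul _]
    simp only [integral_const_mul]
  have h_tail := measureReal_expect_sub_integral_ge_le_of_iIndepFun h_indep hY h_meas h_bound ht
  simpa only [h_integral, Finset.expect_sum_comm, ← Finset.mul_expect, ← Finset.sum_sub_distrib,
    ← mul_sub] using h_tail

end Hoeffding

lemma sum_sq_sub_le_sum_sq_sub_iff {ι R : Type*} [CommRing R] [PartialOrder R]
    [IsOrderedAddMonoid R] (s : Finset ι) (a b m z : ι → R) :
    ∑ i ∈ s, (z i - b i) ^ 2 ≤ ∑ i ∈ s, (z i - a i) ^ 2 ↔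
      ∑ i ∈ s, ((b i - m i) ^ 2 - (a i - m i) ^ 2) ≤
        ∑ i ∈ s, 2 * (b i - a i) * (z i - m i) := by
  rw [← sub_nonneg, ← sub_nonneg (b := ∑ i ∈ s, ((b i - m i) ^ 2 - (a i - m i) ^ 2)),
    ← Finset.sum_sub_distrib, ← Finset.sum_sub_distrib]
  refine (congrArg (0 ≤ ·) (Finset.sum_congr rfl fun i _ => ?_)).to_iff
  ring

open ProbabilityTheory BigOperators in
theorem mcdiarmid_moment_bound_general {Ω α J ι : Type*} {mΩ : MeasurableSpace Ω}
    [MeasurableSpace α] [Fintype J] [Nonempty J] [Fintype ι] {μ : Measure Ω} {P : Measure α}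
    {Y : J → Ω → α} (h_indep : iIndepFun Y μ) (hY : ∀ j, HasLaw (Y j) P μ)
    {ψ : ι → α → ℝ} (hψ : ∀ k, AEMeasurable (ψ k) P)
    {M : ℝ} (hM : ∀ k, ∀ᵐ x ∂P, |ψ k x| ≤ M) (a b : ι → ℝ)
    {D : ℝ} (hD_def : D = ∑ k, ((b k - ∫ x, ψ k x ∂P) ^ 2 - (a k - ∫ x, ψ k x ∂P) ^ 2))
    (hD : 0 ≤ D) :
    μ.real {ω | ∑ k, (𝔼 j, ψ k (Y j ω) - b k) ^ 2 ≤ ∑ k, (𝔼 j, ψ k (Y j ω) - a k) ^ 2} ≤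
      Real.exp (-Fintype.card J * D ^ 2 / (8 * M ^ 2 * (∑ k, |b k - a k|) ^ 2)) := by
  simp only [sum_sq_sub_le_sum_sq_sub_iff Finset.univ a b (fun k => ∫ x, ψ k x ∂P), ← hD_def]
  refine (measureReal_sum_mul_expect_sub_integral_ge_le_of_iIndepFun h_indep hY hψ hM
    (fun k => 2 * (b k - a k)) hD).trans_eq (congrArg Real.exp ?_)
  simp only [abs_mul, abs_two, ← Finset.mul_sum]
  ring

/-- McDiarmid-type bound: for i.i.d. samples `x_1,…,x_s ∼ P₀` with
bounded moment functions `|ψ_k| ≤ M` and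
`D(P₀) = ∑_k [(E_{Q̂₁}[ψ_k] − E_{P₀}[ψ_k])² − (E_{Q̂₀}[ψ_k] − E_{P₀}[ψ_k])²] > 0`,
the probability that the empirical moments are closer (in squared distance) to the
nominal moments of `Q̂₁` than to those of `Q̂₀` is at most
`exp(−s D(P₀)² / (8 M² (∑_k |E_{Q̂₁}[ψ_k] − E_{Q̂₀}[ψ_k]|)²))`. -/
theorem mcdiarmid_moment_bound
    {d : ℕ} (X : Set (EuclideanSpace ℝ (Fin d))) (hX : IsCompact X)
    {K : ℕ} (ψ : Fin K → X → ℝ) (hψ : ∀ k, Continuous (ψ k))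
    (M : ℝ) (hM : ∀ k, ∀ x : X, |ψ k x| ≤ M)
    (Q0 Q1 P0 : Measure X)
    [IsProbabilityMeasure Q0] [IsProbabilityMeasure Q1] [IsProbabilityMeasure P0]
    (E0 E1 m : Fin K → ℝ)
    (hE0 : ∀ k, E0 k = ∫ x, ψ k x ∂Q0) (hE1 : ∀ k, E1 k = ∫ x, ψ k x ∂Q1)
    (hm : ∀ k, m k = ∫ x, ψ k x ∂P0)
    (D : ℝ) (hDdef : D = ∑ k, ((E1 k - m k) ^ 2 - (E0 k - m k) ^ 2)) (hD : 0 < D)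
    (s : ℕ) (hs : 0 < s) :
    (Measure.pi fun _ : Fin s => P0)
        {ω : Fin s → X |
          ∑ k, |(s : ℝ)⁻¹ * ∑ j, ψ k (ω j) - E1 k| ^ 2 ≤
            ∑ k, |(s : ℝ)⁻¹ * ∑ j, ψ k (ω j) - E0 k| ^ 2} ≤
      ENNReal.ofReal (Real.exp (-(s : ℝ) * D ^ 2 /
        (8 * M ^ 2 * (∑ k, |E1 k - E0 k|) ^ 2))) := by
  have : Nonempty (Fin s) := Fin.pos_iff_nonempty.mp hs
  rw [← ofReal_measureReal]
  simpa only [sq_abs, id, Fintype.expect_eq_sum_div_card, Fintype.card_fin,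
    div_eq_inv_mul] using ENNReal.ofReal_le_ofReal (mcdiarmid_moment_bound_general
      (ProbabilityTheory.iIndepFun_pi (X := fun _ => id) fun _ => aemeasurable_id)
      (fun j => (measurePreserving_eval (fun _ : Fin s => P0) j).hasLaw)
      (fun k => (hψ k).measurable.aemeasurable) (fun k => ae_of_all _ (hM k)) E0 E1
      (by simpa only [hm] using hDdef) hD.le)
end

section
/- With matrix-valued moment uncertainty sets 𝒮_i^η = {P ∈ 𝒫 : −η I ⪯ E_P[Ψ_k] − E_{Q̂_i}[Ψ_k] ⪯ η I for all k = 1,…,K}, i = 0,1, both nonempty, the minimax identity holds: inf_φ sup_{P_0 ∈ 𝒮_0^η, P_1 ∈ 𝒮_1^η} P_E(φ; P_0, P_1) = sup_{P_0 ∈ 𝒮_0^η, P_1 ∈ 𝒮_1^η} inf_φ P_E(φ; P_0, P_1), where the infimum is over all measurable tests φ : X → [0,1]. -/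
open MeasureTheory

/-- Entrywise expectation of a matrix-valued function under a measure. -/
noncomputable def matExp {Ω : Type*} [MeasurableSpace Ω] {m : Type*}
    (Ψ : Ω → Matrix m m ℝ) (P : Measure Ω) : Matrix m m ℝ :=
  Matrix.of fun i j => ∫ x, Ψ x i j ∂P

/-- The matrix-moment uncertainty set
`𝒮^η(Q̂) = {P : −η I ⪯ E_P[Ψ_k] − E_{Q̂}[Ψ_k] ⪯ η I, k = 1,…,K}`. -/
def matrixMomentSet {d : ℕ} (X : Set (EuclideanSpace ℝ (Fin d))) {K : ℕ}
    {dk : Fin K → ℕ} (Ψ : ∀ k, X → Matrix (Fin (dk k)) (Fin (dk k)) ℝ)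
    (Qhat : ProbabilityMeasure X) (η : ℝ) : Set (ProbabilityMeasure X) :=
  {P | ∀ k, (matExp (Ψ k) (P : Measure X) - matExp (Ψ k) (Qhat : Measure X) +
      η • (1 : Matrix (Fin (dk k)) (Fin (dk k)) ℝ)).PosSemidef ∧
    (η • (1 : Matrix (Fin (dk k)) (Fin (dk k)) ℝ) -
      (matExp (Ψ k) (P : Measure X) - matExp (Ψ k) (Qhat : Measure X))).PosSemidef}

/-!
Weak duality gives one inequality. For the other, suppose every pair `(P₀, P₁)` admits a test with
error below `c`; by density in `L¹(P₀ + P₁)` the test may be taken continuous, which makes its error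
weakly continuous in the pair. By compactness finitely many continuous tests suffice for all pairs.
Their error vectors form a compact convex subset of a Euclidean space that misses the orthant
`{x | ∀ i, c ≤ x i}`. A separating hyperplane has a nonnegative normal, and normalizing it to a
probability vector gives the weights of a mixture of these tests with error below `c` on every pair.
-/

open scoped NNReal

section Minimax

theorem ciInf_ciSup_eq_ciSup_ciInf {α β γ : Type*} [ConditionallyCompleteLinearOrder γ]
    [DenselyOrdered γ] [Nonempty α] [Nonempty β] {e : α → β → γ} {l u : γ}
    (he : ∀ a b, e a b ∈ Set.Icc l u)
    (h : ∀ c, (∀ b, ∃ a, e a b < c) → ∃ a, ∀ b, e a b ≤ c) :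
    ⨅ a, ⨆ b, e a b = ⨆ b, ⨅ a, e a b := by
  have hsup (a : α) : BddAbove (Set.range (e a)) :=
    ⟨u, Set.forall_mem_range.2 fun b => (he a b).2⟩
  have hinf (b : β) : BddBelow (Set.range fun a => e a b) :=
    ⟨l, Set.forall_mem_range.2 fun a => (he a b).1⟩
  have hinf_sup : BddBelow (Set.range fun a => ⨆ b, e a b) :=
    ⟨l, Set.forall_mem_range.2 fun a => le_ciSup_of_le (hsup a) (Classical.arbitrary β) (he a _).1⟩
  have hsup_inf : BddAbove (Set.range fun b => ⨅ a, e a b) :=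
    ⟨u, Set.forall_mem_range.2 fun b => ciInf_le_of_le (hinf b) (Classical.arbitrary α) (he _ b).2⟩
  refine le_antisymm (le_of_forall_gt_imp_ge_of_dense fun c hc => ?_)
    (ciSup_le fun b => le_ciInf fun a => (ciInf_le (hinf b) a).trans (le_ciSup (hsup a) b))
  obtain ⟨a, ha⟩ := h c fun b => exists_lt_of_ciInf_lt ((le_ciSup hsup_inf b).trans_lt hc)
  exact ciInf_le_of_le hinf_sup a (ciSup_le ha)

theorem sSup_setOf_exists_mem_exists_mem_eq {α β γ : Type*} [SupSet γ] (S : Set α) (T : Set β)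
    (f : α → β → γ) :
    sSup {r | ∃ a ∈ S, ∃ b ∈ T, r = f a b} = ⨆ p : S × T, f p.1 p.2 := by
  congr 1
  ext r
  simp only [Set.mem_range, Prod.exists, Subtype.exists, exists_prop, Set.mem_ofPred_eq,
    eq_comm (a := r)]

theorem exists_mem_stdSimplex_dotProduct_neg {ι : Type*} [Fintype ι] {C : Set (ι → ℝ)}
    (hC : Convex ℝ C) (hK : IsCompact C) (hne : C.Nonempty) (h : ∀ x ∈ C, ∃ i, x i < 0) :
    ∃ w ∈ stdSimplex ℝ ι, ∀ x ∈ C, w ⬝ᵥ x < 0 := by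
  classical
  have hdisj : Disjoint C (ProperCone.positive ℝ (ι → ℝ) : Set (ι → ℝ)) :=
    Set.disjoint_left.2 fun x hx hx0 =>
      let ⟨i, hi⟩ := h x hx
      hi.not_ge (hx0 i)
  obtain ⟨f, hf0, hfC⟩ := (ProperCone.positive ℝ (ι → ℝ)).hyperplane_separation hC hK hdisj
  obtain ⟨v, hv⟩ := (dotProductEquiv ℝ ι).surjective f.toLinearMap
  have hfv (x : ι → ℝ) : f x = v ⬝ᵥ x := (LinearMap.congr_fun hv x).symm
  have hv0 (i : ι) : 0 ≤ v i := by
    simpa [hfv] using hf0 (Pi.single i 1) (Pi.single_nonneg.2 zero_le_one)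
  have hsum : 0 < ∑ i, v i := by
    obtain ⟨x, hx⟩ := hne
    refine (Finset.sum_nonneg fun i _ => hv0 i).lt_of_ne' fun hzero => (hfC x hx).ne ?_
    have : v = 0 := funext fun i =>
      (Finset.sum_eq_zero_iff_of_nonneg fun i _ => hv0 i).1 hzero i (Finset.mem_univ i)
    rw [hfv, this, zero_dotProduct]
  refine ⟨(∑ i, v i)⁻¹ • v, ⟨fun i => mul_nonneg (inv_nonneg.2 hsum.le) (hv0 i), ?_⟩,
    fun x hx => ?_⟩
  · simp only [Pi.smul_apply, smul_eq_mul, ← Finset.mul_sum, inv_mul_cancel₀ hsum.ne']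
  · rw [smul_dotProduct, ← hfv]
    exact mul_neg_of_pos_of_neg (inv_pos.2 hsum) (hfC x hx)

theorem exists_finset_mem_stdSimplex_sum_lt {ι : Type*} {C : Set (ι → ℝ)} (hC : Convex ℝ C)
    (hK : IsCompact C) (hne : C.Nonempty) {c : ℝ} (h : ∀ x ∈ C, ∃ i, x i < c) :
    ∃ (s : Finset ι) (w : s → ℝ), w ∈ stdSimplex ℝ s ∧ ∀ x ∈ C, ∑ i : s, w i * x i < c := by
  obtain ⟨s, hs⟩ := hK.elim_finite_subcover (fun i => {x : ι → ℝ | x i < c})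
    (fun i => isOpen_lt (continuous_apply i) continuous_const)
    fun x hx => Set.mem_iUnion.2 (h x hx)
  let F : (ι → ℝ) → s → ℝ := fun x i => x i - c
  have hF : Convex ℝ (F '' C) := by
    rintro _ ⟨x, hx, rfl⟩ _ ⟨y, hy, rfl⟩ a b ha hb hab
    refine ⟨a • x + b • y, hC hx hy ha hb hab, funext fun i => ?_⟩
    simp only [F, Pi.add_apply, Pi.smul_apply, smul_eq_mul]
    linear_combination c * hab
  have hneg : ∀ y ∈ F '' C, ∃ i, y i < 0 := by
    rintro _ ⟨x, hx, rfl⟩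
    obtain ⟨i, hi, hxi⟩ := Set.mem_iUnion₂.1 (hs hx)
    exact ⟨⟨i, hi⟩, sub_neg.2 hxi⟩
  obtain ⟨w, hw, hlt⟩ :=
    exists_mem_stdSimplex_dotProduct_neg hF (hK.image (by fun_prop)) (hne.image F) hneg
  refine ⟨s, w, hw, fun x hx => sub_neg.1 ?_⟩
  have hwx : w ⬝ᵥ F x = ∑ i, w i * x i - c := by
    simp only [F, dotProduct, mul_sub, Finset.sum_sub_distrib, ← Finset.sum_mul, hw.2, one_mul]
  exact hwx ▸ hlt _ (Set.mem_image_of_mem F hx)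

end Minimax

theorem integral_smul_add_smul_measure_s17 {Ω : Type*} [MeasurableSpace Ω] {E : Type*}
    [NormedAddCommGroup E] [NormedSpace ℝ E] {μ ν : Measure Ω} {f : Ω → E}
    (hμ : Integrable f μ) (hν : Integrable f ν) (a b : ℝ≥0) :
    ∫ x, f x ∂(a • μ + b • ν) = a • ∫ x, f x ∂μ + b • ∫ x, f x ∂ν := by
  rw [integral_add_measure hμ.smul_measure_nnreal hν.smul_measure_nnreal,
    integral_smul_nnreal_measure, integral_smul_nnreal_measure]

section Tests

variable {Ω : Type*} [MeasurableSpace Ω]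

/-- The randomized tests on `Ω`: measurable functions giving the probability of rejecting `P₀`. -/
def tests (Ω : Type*) [MeasurableSpace Ω] : Set (Ω → ℝ) :=
  {φ | Measurable φ ∧ ∀ x, φ x ∈ Set.Icc (0 : ℝ) 1}

theorem sInf_setOf_test_eq {γ : Type*} [InfSet γ] (f : (Ω → ℝ) → γ) :
    sInf {r | ∃ φ : Ω → ℝ, Measurable φ ∧ (∀ x, φ x ∈ Set.Icc (0 : ℝ) 1) ∧ r = f φ} =
      ⨅ φ : tests Ω, f φ := by
  congr 1
  ext r
  simp only [Set.mem_range, Subtype.exists, exists_prop, tests, Set.mem_ofPred_eq, and_assoc,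
    eq_comm (a := r)]

theorem zero_mem_tests : (0 : Ω → ℝ) ∈ tests Ω :=
  ⟨measurable_const, fun _ => ⟨le_rfl, zero_le_one⟩⟩

theorem one_sub_mem_tests {φ : Ω → ℝ} (hφ : φ ∈ tests Ω) : (fun x => 1 - φ x) ∈ tests Ω :=
  ⟨hφ.1.const_sub 1, fun x => ⟨sub_nonneg.2 (hφ.2 x).2, sub_le_self 1 (hφ.2 x).1⟩⟩

theorem sum_mul_mem_tests {ι : Type*} [Fintype ι] {w : ι → ℝ} (hw : w ∈ stdSimplex ℝ ι)
    {φ : ι → Ω → ℝ} (hφ : ∀ i, φ i ∈ tests Ω) : (fun x => ∑ i, w i * φ i x) ∈ tests Ω :=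
  ⟨Finset.measurable_fun_sum _ fun i _ => (hφ i).1.const_mul (w i), fun x =>
    (convex_Icc (0 : ℝ) 1).sum_mem (fun i _ => hw.1 i) hw.2 fun i _ => (hφ i).2 x⟩

theorem integrable_of_mem_tests (μ : Measure Ω) [IsFiniteMeasure μ] {φ : Ω → ℝ}
    (hφ : φ ∈ tests Ω) : Integrable φ μ :=
  .of_mem_Icc 0 1 hφ.1.aemeasurable (.of_forall hφ.2)

theorem integral_mem_Icc_of_mem_tests (μ : Measure Ω) [IsProbabilityMeasure μ] {φ : Ω → ℝ}
    (hφ : φ ∈ tests Ω) : ∫ x, φ x ∂μ ∈ Set.Icc (0 : ℝ) 1 :=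
  (convex_Icc (0 : ℝ) 1).integral_mem isClosed_Icc (.of_forall hφ.2) (integrable_of_mem_tests μ hφ)

theorem exists_continuous_mem_tests_integral_abs_sub_le [TopologicalSpace Ω]
    [TopologicalSpace.PseudoMetrizableSpace Ω] [BorelSpace Ω] (μ : Measure Ω) [IsFiniteMeasure μ]
    {φ : Ω → ℝ} (hφ : φ ∈ tests Ω) {ε : ℝ} (hε : 0 < ε) :
    ∃ ψ ∈ tests Ω, Continuous ψ ∧ ∫ x, |φ x - ψ x| ∂μ ≤ ε := by
  have hφint := integrable_of_mem_tests μ hφ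
  obtain ⟨g, hg, hgint⟩ := hφint.exists_boundedContinuous_integral_sub_le hε
  let ψ : Ω → ℝ := fun x => Set.projIcc (0 : ℝ) 1 zero_le_one (g x)
  have hψcont : Continuous ψ := continuous_subtype_val.comp (continuous_projIcc.comp g.continuous)
  have hψ : ψ ∈ tests Ω := ⟨hψcont.measurable, fun x => Subtype.coe_prop _⟩
  have hclip (x : Ω) : |φ x - ψ x| ≤ ‖φ x - g x‖ := by
    simpa only [Set.projIcc_of_mem zero_le_one (hφ.2 x)] using!
      Set.abs_projIcc_sub_projIcc (zero_le_one (α := ℝ)) (c := φ x) (d := g x)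
  exact ⟨ψ, hψ, hψcont, (integral_mono (hφint.sub (integrable_of_mem_tests μ hψ)).abs
    (hφint.sub hgint).norm hclip).trans hg⟩

end Tests

section BayesError

variable {Ω : Type*} [MeasurableSpace Ω]

theorem bayesError_mem_Icc_s17 {φ : Ω → ℝ} (hφ : φ ∈ tests Ω) (P₀ P₁ : Measure Ω)
    [IsProbabilityMeasure P₀] [IsProbabilityMeasure P₁] :
    bayesError φ P₀ P₁ ∈ Set.Icc (0 : ℝ) 1 :=
  have half_nonneg : (0 : ℝ) ≤ 1 / 2 := by norm_num
  convex_Icc (0 : ℝ) 1 (integral_mem_Icc_of_mem_tests P₀ hφ)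
    (integral_mem_Icc_of_mem_tests P₁ (one_sub_mem_tests hφ))
    half_nonneg half_nonneg (add_halves 1)

theorem bayesError_smul_add_smul {φ : Ω → ℝ} (hφ : φ ∈ tests Ω) (P₀ P₁ Q₀ Q₁ : Measure Ω)
    [IsFiniteMeasure P₀] [IsFiniteMeasure P₁] [IsFiniteMeasure Q₀] [IsFiniteMeasure Q₁]
    (a b : ℝ≥0) :
    bayesError φ (a • P₀ + b • Q₀) (a • P₁ + b • Q₁) =
      a * bayesError φ P₀ P₁ + b * bayesError φ Q₀ Q₁ := by
  have hφ' := one_sub_mem_tests hφ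
  rw [bayesError, bayesError, bayesError,
    integral_smul_add_smul_measure_s17 (integrable_of_mem_tests P₀ hφ) (integrable_of_mem_tests Q₀ hφ),
    integral_smul_add_smul_measure_s17 (integrable_of_mem_tests P₁ hφ')
      (integrable_of_mem_tests Q₁ hφ')]
  simp only [NNReal.smul_def, smul_eq_mul]
  ring

theorem bayesError_sum_mul {ι : Type*} [Fintype ι] {w : ι → ℝ} (hw : ∑ i, w i = 1)
    {φ : ι → Ω → ℝ} (hφ : ∀ i, φ i ∈ tests Ω) (P₀ P₁ : Measure Ω) [IsFiniteMeasure P₀]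
    [IsFiniteMeasure P₁] :
    bayesError (fun x => ∑ i, w i * φ i x) P₀ P₁ = ∑ i, w i * bayesError (φ i) P₀ P₁ := by
  have hint (μ : Measure Ω) [IsFiniteMeasure μ] {ψ : ι → Ω → ℝ} (hψ : ∀ i, ψ i ∈ tests Ω) :
      ∫ x, ∑ i, w i * ψ i x ∂μ = ∑ i, w i * ∫ x, ψ i x ∂μ := by
    rw [integral_finsetSum _ fun i _ => (integrable_of_mem_tests μ (hψ i)).const_mul (w i)]
    simp only [integral_const_mul]
  have hsub (x : Ω) : 1 - ∑ i, w i * φ i x = ∑ i, w i * (1 - φ i x) := by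
    simp only [mul_sub, mul_one, Finset.sum_sub_distrib, hw]
  simp only [bayesError, hsub]
  rw [hint P₀ hφ, hint P₁ fun i => one_sub_mem_tests (hφ i), Finset.mul_sum, Finset.mul_sum,
    ← Finset.sum_add_distrib]
  exact Finset.sum_congr rfl fun i _ => by ring

theorem bayesError_le_add_integral_abs_sub_s17 {φ ψ : Ω → ℝ} (hφ : φ ∈ tests Ω) (hψ : ψ ∈ tests Ω)
    (P₀ P₁ : Measure Ω) [IsFiniteMeasure P₀] [IsFiniteMeasure P₁] :
    bayesError ψ P₀ P₁ ≤ bayesError φ P₀ P₁ + 1 / 2 * ∫ x, |φ x - ψ x| ∂(P₀ + P₁) := by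
  have hint {f : Ω → ℝ} (hf : f ∈ tests Ω) (μ : Measure Ω) [IsFiniteMeasure μ] :=
    integrable_of_mem_tests μ hf
  have habs (μ : Measure Ω) [IsFiniteMeasure μ] : Integrable (fun x => |φ x - ψ x|) μ :=
    ((hint hφ μ).sub (hint hψ μ)).abs
  have h₀ : ∫ x, ψ x ∂P₀ ≤ ∫ x, φ x ∂P₀ + ∫ x, |φ x - ψ x| ∂P₀ := by
    rw [← integral_add (hint hφ P₀) (habs P₀)]
    refine integral_mono (hint hψ P₀) ((hint hφ P₀).add (habs P₀)) fun x => ?_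
    linarith [neg_abs_le (φ x - ψ x)]
  have h₁ : ∫ x, (1 - ψ x) ∂P₁ ≤ ∫ x, (1 - φ x) ∂P₁ + ∫ x, |φ x - ψ x| ∂P₁ := by
    have hφ' := hint (one_sub_mem_tests hφ) P₁
    rw [← integral_add hφ' (habs P₁)]
    refine integral_mono (hint (one_sub_mem_tests hψ) P₁) (hφ'.add (habs P₁)) fun x => ?_
    linarith [le_abs_self (φ x - ψ x)]
  rw [integral_add_measure (habs P₀) (habs P₁), bayesError, bayesError]
  linarith

variable {S₀ S₁ : Set (ProbabilityMeasure Ω)}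

theorem convex_image_bayesError_prod (hC₀ : Convex ℝ≥0 (ProbabilityMeasure.toMeasure '' S₀))
    (hC₁ : Convex ℝ≥0 (ProbabilityMeasure.toMeasure '' S₁)) {ι : Type*} {φ : ι → Ω → ℝ}
    (hφ : ∀ i, φ i ∈ tests Ω) :
    Convex ℝ ((fun P i => bayesError (φ i) (P.1 : Measure Ω) P.2) '' S₀ ×ˢ S₁) := by
  rintro _ ⟨P, hP, rfl⟩ _ ⟨Q, hQ, rfl⟩ a b ha hb hab
  lift a to ℝ≥0 using ha
  lift b to ℝ≥0 using hb
  norm_cast at hab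
  obtain ⟨R₀, hR₀, hR₀_eq⟩ := hC₀ ⟨P.1, hP.1, rfl⟩ ⟨Q.1, hQ.1, rfl⟩ a.2 b.2 hab
  obtain ⟨R₁, hR₁, hR₁_eq⟩ := hC₁ ⟨P.2, hP.2, rfl⟩ ⟨Q.2, hQ.2, rfl⟩ a.2 b.2 hab
  refine ⟨(R₀, R₁), ⟨hR₀, hR₁⟩, funext fun i => ?_⟩
  simp only [hR₀_eq, hR₁_eq]
  exact bayesError_smul_add_smul (hφ i) _ _ _ _ a b

variable [TopologicalSpace Ω]

theorem continuous_bayesError [OpensMeasurableSpace Ω] {φ : Ω → ℝ} (hφ : φ ∈ tests Ω)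
    (hcont : Continuous φ) : Continuous fun P : ProbabilityMeasure Ω × ProbabilityMeasure Ω =>
      bayesError φ (P.1 : Measure Ω) (P.2 : Measure Ω) := by
  have hint {ψ : Ω → ℝ} (hψ : ψ ∈ tests Ω) (hψc : Continuous ψ) :
      Continuous fun P : ProbabilityMeasure Ω => ∫ x, ψ x ∂(P : Measure Ω) :=
    ProbabilityMeasure.continuous_integral_boundedContinuousFunction <|
      .mkOfBound ⟨ψ, hψc⟩ 1 fun x y => Real.dist_le_of_mem_Icc_01 (hψ.2 x) (hψ.2 y)
  exact (((hint hφ hcont).comp continuous_fst).const_mul _).add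
    (((hint (one_sub_mem_tests hφ) (continuous_const.sub hcont)).comp continuous_snd).const_mul _)

variable [TopologicalSpace.PseudoMetrizableSpace Ω] [BorelSpace Ω]

theorem exists_continuous_mem_tests_bayesError_lt {φ : Ω → ℝ} (hφ : φ ∈ tests Ω)
    (P₀ P₁ : Measure Ω) [IsFiniteMeasure P₀] [IsFiniteMeasure P₁] {c : ℝ}
    (hc : bayesError φ P₀ P₁ < c) : ∃ ψ ∈ tests Ω, Continuous ψ ∧ bayesError ψ P₀ P₁ < c := by
  obtain ⟨ψ, hψ, hψcont, hle⟩ :=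
    exists_continuous_mem_tests_integral_abs_sub_le (P₀ + P₁) hφ (sub_pos.2 hc)
  refine ⟨ψ, hψ, hψcont, (bayesError_le_add_integral_abs_sub_s17 hφ hψ P₀ P₁).trans_lt ?_⟩
  linarith

theorem exists_mem_tests_forall_bayesError_lt (hne₀ : S₀.Nonempty) (hne₁ : S₁.Nonempty)
    (hK₀ : IsCompact S₀) (hK₁ : IsCompact S₁)
    (hC₀ : Convex ℝ≥0 (ProbabilityMeasure.toMeasure '' S₀))
    (hC₁ : Convex ℝ≥0 (ProbabilityMeasure.toMeasure '' S₁)) {c : ℝ}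
    (h : ∀ P₀ ∈ S₀, ∀ P₁ ∈ S₁, ∃ φ ∈ tests Ω, bayesError φ (P₀ : Measure Ω) P₁ < c) :
    ∃ φ ∈ tests Ω, ∀ P₀ ∈ S₀, ∀ P₁ ∈ S₁, bayesError φ (P₀ : Measure Ω) P₁ < c := by
  let Φ := {ψ : Ω → ℝ // ψ ∈ tests Ω ∧ Continuous ψ}
  let payoff : ProbabilityMeasure Ω × ProbabilityMeasure Ω → Φ → ℝ := fun P ψ =>
    bayesError ψ.1 (P.1 : Measure Ω) P.2
  have hpayoff : Continuous payoff := continuous_pi fun ψ => continuous_bayesError ψ.2.1 ψ.2.2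
  have hlow : ∀ x ∈ payoff '' S₀ ×ˢ S₁, ∃ ψ, x ψ < c := by
    rintro _ ⟨P, hP, rfl⟩
    obtain ⟨φ, hφ, hφc⟩ := h P.1 hP.1 P.2 hP.2
    obtain ⟨ψ, hψ, hψcont, hψc⟩ := exists_continuous_mem_tests_bayesError_lt hφ _ _ hφc
    exact ⟨⟨ψ, hψ, hψcont⟩, hψc⟩
  obtain ⟨s, w, hw, hlt⟩ := exists_finset_mem_stdSimplex_sum_lt
    (convex_image_bayesError_prod hC₀ hC₁ fun ψ : Φ => ψ.2.1)
    ((hK₀.prod hK₁).image hpayoff) ((hne₀.prod hne₁).image payoff) hlow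
  refine ⟨_, sum_mul_mem_tests hw fun ψ => ψ.1.2.1, fun P₀ hP₀ P₁ hP₁ => ?_⟩
  rw [bayesError_sum_mul hw.2 fun ψ => ψ.1.2.1]
  exact hlt _ ⟨(P₀, P₁), ⟨hP₀, hP₁⟩, rfl⟩

theorem matrix_minimax_eq_maximin_general (hne₀ : S₀.Nonempty) (hne₁ : S₁.Nonempty)
    (hK₀ : IsCompact S₀) (hK₁ : IsCompact S₁)
    (hC₀ : Convex ℝ≥0 (ProbabilityMeasure.toMeasure '' S₀))
    (hC₁ : Convex ℝ≥0 (ProbabilityMeasure.toMeasure '' S₁)) :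
    ⨅ φ : tests Ω, ⨆ P : S₀ × S₁, bayesError φ.1 (P.1.1 : Measure Ω) (P.2.1 : Measure Ω) =
      ⨆ P : S₀ × S₁, ⨅ φ : tests Ω, bayesError φ.1 (P.1.1 : Measure Ω) (P.2.1 : Measure Ω) := by
  have := hne₀.to_subtype
  have := hne₁.to_subtype
  have : Nonempty (tests Ω) := ⟨0, zero_mem_tests⟩
  refine ciInf_ciSup_eq_ciSup_ciInf (fun φ P => bayesError_mem_Icc_s17 φ.2 _ _) fun c hc => ?_
  obtain ⟨φ, hφ, hlt⟩ := exists_mem_tests_forall_bayesError_lt hne₀ hne₁ hK₀ hK₁ hC₀ hC₁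
    fun P₀ hP₀ P₁ hP₁ =>
      let ⟨φ, hφ⟩ := hc (⟨P₀, hP₀⟩, ⟨P₁, hP₁⟩)
      ⟨φ.1, φ.2, hφ⟩
  exact ⟨⟨φ, hφ⟩, fun P => (hlt P.1 P.1.2 P.2 P.2.2).le⟩

end BayesError

section MomentSet

theorem isClosed_setOf_posSemidef {n R : Type*} [Ring R] [PartialOrder R] [StarRing R]
    [TopologicalSpace R] [IsTopologicalSemiring R] [ContinuousStar R] [OrderClosedTopology R] :
    IsClosed {M : Matrix n n R | M.PosSemidef} := by
  simp only [Matrix.PosSemidef, Set.ofPred_and, Set.ofPred_forall]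
  refine (isClosed_eq (by fun_prop) continuous_id).inter (isClosed_iInter fun x => ?_)
  refine isClosed_le continuous_const <| continuous_finsetSum _ fun i _ =>
    continuous_finsetSum _ fun j _ => ?_
  exact (continuous_const.mul (continuous_id.matrix_elem i j)).mul continuous_const

/-- The closed ball of radius `η` around `A` for the Loewner order,
`{M | −η I ⪯ M − A ⪯ η I}`; a moment set consists of the measures whose `k`-th matrix moment lies
in such a ball for every `k`. -/
def loewnerBall {n : Type*} [DecidableEq n] (A : Matrix n n ℝ) (η : ℝ) : Set (Matrix n n ℝ) :=
  {M | (M - A + η • (1 : Matrix n n ℝ)).PosSemidef ∧ (η • (1 : Matrix n n ℝ) - (M - A)).PosSemidef}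

theorem isClosed_loewnerBall {n : Type*} [DecidableEq n] (A : Matrix n n ℝ) (η : ℝ) :
    IsClosed (loewnerBall A η) :=
  (isClosed_setOf_posSemidef.preimage (by fun_prop)).inter
    (isClosed_setOf_posSemidef.preimage (by fun_prop))

theorem convex_loewnerBall {n : Type*} [DecidableEq n] (A : Matrix n n ℝ) (η : ℝ) :
    Convex ℝ (loewnerBall A η) := by
  rintro M ⟨hM, hM'⟩ N ⟨hN, hN'⟩ a b ha hb hab
  obtain rfl : b = 1 - a := eq_sub_of_add_eq' hab
  constructor
  · convert (hM.smul ha).add (hN.smul hb) using 1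
    module
  · convert (hM'.smul ha).add (hN'.smul hb) using 1
    module

theorem matExp_smul_add_smul {Ω : Type*} [MeasurableSpace Ω] {m : Type*} {Ψ : Ω → Matrix m m ℝ}
    {P Q : Measure Ω} (hP : ∀ i j, Integrable (fun x => Ψ x i j) P)
    (hQ : ∀ i j, Integrable (fun x => Ψ x i j) Q) (a b : ℝ≥0) :
    matExp Ψ (a • P + b • Q) = a • matExp Ψ P + b • matExp Ψ Q :=
  Matrix.ext fun i j => integral_smul_add_smul_measure_s17 (hP i j) (hQ i j) a b

theorem continuous_matExp {Ω : Type*} [TopologicalSpace Ω] [CompactSpace Ω] [MeasurableSpace Ω]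
    [OpensMeasurableSpace Ω] {m : Type*} {Ψ : Ω → Matrix m m ℝ} (hΨ : Continuous Ψ) :
    Continuous fun P : ProbabilityMeasure Ω => matExp Ψ (P : Measure Ω) :=
  continuous_matrix fun i j =>
    ProbabilityMeasure.continuous_integral_continuousMap
      (⟨fun x => Ψ x i j, hΨ.matrix_elem i j⟩ : C(Ω, ℝ))

variable {d : ℕ} {X : Set (EuclideanSpace ℝ (Fin d))} {K : ℕ} {dk : Fin K → ℕ}
  {Ψ : ∀ k, X → Matrix (Fin (dk k)) (Fin (dk k)) ℝ}

theorem matrixMomentSet_eq_iInter (Q : ProbabilityMeasure X) (η : ℝ) :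
    matrixMomentSet X Ψ Q η =
      ⋂ k, (fun P : ProbabilityMeasure X => matExp (Ψ k) (P : Measure X)) ⁻¹'
        loewnerBall (matExp (Ψ k) (Q : Measure X)) η := by
  ext P
  simp only [Set.mem_iInter]
  rfl

theorem isCompact_matrixMomentSet [CompactSpace X] (hΨ : ∀ k, Continuous (Ψ k))
    (Q : ProbabilityMeasure X) (η : ℝ) : IsCompact (matrixMomentSet X Ψ Q η) := by
  rw [matrixMomentSet_eq_iInter]
  exact (isClosed_iInter fun k =>
    (isClosed_loewnerBall _ η).preimage (continuous_matExp (hΨ k))).isCompact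

theorem convex_toMeasure_image_matrixMomentSet
    (hΨ : ∀ k i j (P : ProbabilityMeasure X), Integrable (fun x => Ψ k x i j) (P : Measure X))
    (Q : ProbabilityMeasure X) (η : ℝ) :
    Convex ℝ≥0 (ProbabilityMeasure.toMeasure '' matrixMomentSet X Ψ Q η) := by
  rintro _ ⟨P, hP, rfl⟩ _ ⟨P', hP', rfl⟩ a b - - hab
  have hprob : IsProbabilityMeasure (a • (P : Measure X) + b • (P' : Measure X)) :=
    ⟨by simp [← ENNReal.coe_add, hab]⟩
  refine ⟨⟨_, hprob⟩, fun k => ?_, rfl⟩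
  rw [ProbabilityMeasure.coe_mk,
    matExp_smul_add_smul (fun i j => hΨ k i j P) (fun i j => hΨ k i j P')]
  exact convex_loewnerBall _ η (hP k) (hP' k) a.2 b.2 (mod_cast hab)

end MomentSet

/-- Minimax equals maximin for the robust Bayesian testing problem
with matrix-valued moment uncertainty sets. -/
theorem matrix_minimax_eq_maximin
    {d : ℕ} (X : Set (EuclideanSpace ℝ (Fin d))) (hX : IsCompact X)
    {K : ℕ} (dk : Fin K → ℕ)
    (Ψ : ∀ k, X → Matrix (Fin (dk k)) (Fin (dk k)) ℝ)
    (hΨcont : ∀ k, Continuous (Ψ k))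
    (hΨsymm : ∀ k, ∀ x : X, (Ψ k x).IsSymm)
    (Q0 Q1 : ProbabilityMeasure X) (η : ℝ) (hη : 0 < η)
    (hne0 : (matrixMomentSet X Ψ Q0 η).Nonempty)
    (hne1 : (matrixMomentSet X Ψ Q1 η).Nonempty) :
    sInf {r : ℝ | ∃ φ : X → ℝ, Measurable φ ∧ (∀ x, φ x ∈ Set.Icc (0 : ℝ) 1) ∧
        r = sSup {e : ℝ | ∃ P0 ∈ matrixMomentSet X Ψ Q0 η,
          ∃ P1 ∈ matrixMomentSet X Ψ Q1 η,
          e = bayesError φ (P0 : Measure X) (P1 : Measure X)}} =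
      sSup {r : ℝ | ∃ P0 ∈ matrixMomentSet X Ψ Q0 η,
        ∃ P1 ∈ matrixMomentSet X Ψ Q1 η,
        r = sInf {e : ℝ | ∃ φ : X → ℝ, Measurable φ ∧ (∀ x, φ x ∈ Set.Icc (0 : ℝ) 1) ∧
          e = bayesError φ (P0 : Measure X) (P1 : Measure X)}} := by
  have : CompactSpace X := isCompact_iff_compactSpace.1 hX
  have hint (k i j) (P : ProbabilityMeasure X) : Integrable (fun x => Ψ k x i j) (P : Measure X) :=
    ((hΨcont k).matrix_elem i j).integrable_of_hasCompactSupport (.of_compactSpace _)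
  simp only [sInf_setOf_test_eq, sSup_setOf_exists_mem_exists_mem_eq]
  exact matrix_minimax_eq_maximin_general hne0 hne1
    (isCompact_matrixMomentSet hΨcont Q0 η) (isCompact_matrixMomentSet hΨcont Q1 η)
    (convex_toMeasure_image_matrixMomentSet hint Q0 η)
    (convex_toMeasure_image_matrixMomentSet hint Q1 η)
end
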